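/- arXiv:1310.3861 — 2 statements merged into one kernel-verified Lean document; each statement's English description precedes it below -/
import Mathlib

section
/- Let g be a hyperbolic isometry of a tree T, and suppose a fundamental domain for g on its axis is a concatenation of non-overlapping coherently oriented segments α₁, …, α_k. For any oriented segment γ, letting c_γ(αᵢ) be the maximal number of non-overlapping positively oriented copies of γ in αᵢ, and c_γ(g) the analogous count in the quotient circle T_g/⟨g⟩, one has Σᵢ c_γ(αᵢ) ≤ c_γ(g) ≤ k + Σᵢ c_γ(αᵢ). -/
set_option linter.unusedVariables false

variable {V : Type*}

/-- A group `G` acts on the simplicial tree `T` by graph automorphisms, without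
inversions. -/
def IsTreeAction (T : SimpleGraph V) (G : Type*) [Group G] [MulAction G V] : Prop :=
  T.IsTree ∧ (∀ (g : G) (u v : V), T.Adj u v → T.Adj (g • u) (g • v)) ∧
    (∀ (g : G) (u v : V), T.Adj u v → ¬(g • u = v ∧ g • v = u))

/-- `w` lies on the geodesic segment from `u` to `v`. -/
def OnSeg (T : SimpleGraph V) (u w v : V) : Prop :=
  T.dist u w + T.dist w v = T.dist u v

/-- `g` is elliptic: it fixes a vertex of `T`. -/
def Elliptic (T : SimpleGraph V) {G : Type*} [Group G] [MulAction G V] (g : G) : Prop :=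
  ∃ v : V, g • v = v

/-- The translation length of `g`: the minimal displacement of a vertex. -/
noncomputable def transLen (T : SimpleGraph V) {G : Type*} [Group G] [MulAction G V]
    (g : G) : ℕ :=
  sInf {n : ℕ | ∃ v : V, T.dist v (g • v) = n}

/-- The characteristic subtree (the axis, for hyperbolic `g`): the set of vertices of
minimal displacement. -/
def Axis (T : SimpleGraph V) {G : Type*} [Group G] [MulAction G V] (g : G) : Set V :=
  {v : V | T.dist v (g • v) = transLen T g}

/-- For `p, q` on the axis of a hyperbolic `g`: `q` lies (weakly) in the positive
`g`-direction from `p`. -/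
def Ahead (T : SimpleGraph V) {G : Type*} [Group G] [MulAction G V] (g : G)
    (p q : V) : Prop :=
  T.dist p (g • q) = T.dist p q + transLen T g

/-- There are `n` non-overlapping positively oriented copies of the oriented segment `γ`
(given by its endpoints) inside the oriented segment from `u` to `w`: copies are
`G`-translates, they lie on `[u,w]` in order, successive copies meeting in at most one
point. -/
def SegCopies (T : SimpleGraph V) (G : Type*) [Group G] [MulAction G V]
    (γ : V × V) (u w : V) (n : ℕ) : Prop :=
  ∃ p q : Fin n → V,
    (∀ i, (∃ s : G, s • γ.1 = p i ∧ s • γ.2 = q i) ∧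
      OnSeg T u (p i) (q i) ∧ OnSeg T u (q i) w) ∧
    (∀ i j : Fin n, i < j → OnSeg T u (q i) (p j))

/-- `c_γ(α)`: the maximal number of non-overlapping positively oriented copies of `γ` in
the segment from `u` to `w`. -/
noncomputable def cSeg (T : SimpleGraph V) (G : Type*) [Group G] [MulAction G V]
    (γ : V × V) (u w : V) : ℕ :=
  sSup {n : ℕ | SegCopies T G γ u w n}

/-- There are `n` non-overlapping positively oriented copies of `γ` in the quotient
circle `T_g/⟨g⟩`: `n` copies lying on the axis of `g`, coherently oriented with the axis,
pairwise non-overlapping in cyclic order, and all fitting within one period of `g`. -/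
def CircCopies (T : SimpleGraph V) {G : Type*} [Group G] [MulAction G V]
    (g : G) (γ : V × V) (n : ℕ) : Prop :=
  ∃ p q : Fin n → V,
    (∀ i, p i ∈ Axis T g ∧ q i ∈ Axis T g ∧
      (∃ s : G, s • γ.1 = p i ∧ s • γ.2 = q i) ∧ Ahead T g (p i) (q i)) ∧
    (∀ i j : Fin n, i < j → Ahead T g (q i) (p j)) ∧
    (∀ i j : Fin n, Ahead T g (q i) (g • p j))

/-- `c_γ(g)`: the maximal number of non-overlapping positively oriented copies of `γ` in
`T_g/⟨g⟩` (for hyperbolic `g`). -/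
noncomputable def cCirc (T : SimpleGraph V) {G : Type*} [Group G] [MulAction G V]
    (g : G) (γ : V × V) : ℕ :=
  sSup {n : ℕ | CircCopies T g γ n}

section TreeLemmas

variable {T : SimpleGraph V}

theorem aux_dist_mem {x w v : V} (hT : T.IsTree) (P : T.Walk x w) (hP : P.length = T.dist x w)
    (hv : v ∈ P.support) : T.dist x v + T.dist v w = T.dist x w := by
  classical
  have h1 := congrArg SimpleGraph.Walk.length (P.take_spec hv)
  rw [SimpleGraph.Walk.length_append] at h1
  have h2 := SimpleGraph.dist_le (P.takeUntil v hv)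
  have h3 := SimpleGraph.dist_le (P.dropUntil v hv)
  have h4 := hT.connected.dist_triangle (u := x) (v := v) (w := w)
  omega

theorem aux_edge {x w w' z : V} (hT : T.IsTree) (h : T.Adj w w')
    (hx : T.dist x w' = T.dist x w + 1) (hz : T.dist z w = T.dist z w' + 1) :
    T.dist x z = T.dist x w + 1 + T.dist z w' := by
  obtain ⟨P, hP, hPl⟩ := hT.connected.exists_path_of_dist x w
  obtain ⟨Q, hQ, hQl⟩ := hT.connected.exists_path_of_dist w' z
  have hdisj : ∀ v, v ∈ P.support → v ∈ Q.support → False := by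
    intro v hv1 hv2
    have h1 := aux_dist_mem hT P hPl hv1
    have h2 := aux_dist_mem hT Q hQl hv2
    have h3 := hT.connected.dist_triangle (u := x) (v := v) (w := w')
    have h4 := hT.connected.dist_triangle (u := z) (v := v) (w := w)
    rw [T.dist_comm (u := w') (v := v), T.dist_comm (u := v) (v := z),
      T.dist_comm (u := w') (v := z)] at h2
    omega
  have hR : (P.append (SimpleGraph.Walk.cons h Q)).IsPath := by
    rw [SimpleGraph.Walk.isPath_def, SimpleGraph.Walk.support_append,
      SimpleGraph.Walk.support_cons, List.tail_cons, List.nodup_append]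
    refine ⟨hP.support_nodup, hQ.support_nodup, ?_⟩
    intro a ha b hb hab
    subst hab
    exact hdisj a ha hb
  obtain ⟨R, hR', hRl⟩ := hT.connected.exists_path_of_dist x z
  have := (hT.existsUnique_path x z).unique hR hR'
  rw [← hRl, ← this, SimpleGraph.Walk.length_append, SimpleGraph.Walk.length_cons, hPl, hQl,
    T.dist_comm (u := w')]
  omega

theorem aux_toward (hT : T.IsTree) {x z : V} (h : x ≠ z) :
    ∃ y, T.Adj x y ∧ T.dist z x = T.dist z y + 1 := by
  obtain ⟨P, hP, hPl⟩ := hT.connected.exists_path_of_dist x z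
  cases P with
  | nil => exact absurd rfl h
  | @cons _ y _ hxy Q =>
    refine ⟨y, hxy, ?_⟩
    have h1 := SimpleGraph.dist_le Q
    rw [SimpleGraph.Walk.length_cons] at hPl
    have := hT.dist_eq_dist_add_one_of_adj z hxy
    rw [T.dist_comm (u := y)] at h1
    rw [T.dist_comm (u := x)] at hPl
    omega

theorem aux_four (hT : T.IsTree) (x y z : V) : ∀ (n : ℕ) (w : V), T.dist z w = n →
    T.dist x y + T.dist z w ≤ max (T.dist x z + T.dist y w) (T.dist x w + T.dist y z) := by
  intro n
  induction n with
  | zero =>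
    intro w hw
    have : z = w := hT.connected.dist_eq_zero_iff.1 hw
    subst this
    have h3 := hT.connected.dist_triangle (u := x) (v := z) (w := y)
    have := T.dist_comm (u := z) (v := y)
    simp
    omega
  | succ n ih =>
    intro w hw
    have hne : w ≠ z := by
      rintro rfl
      simp at hw
    obtain ⟨w', hadj, hw'⟩ := aux_toward hT hne
    have ih' := ih w' (by omega)
    have hx := hT.dist_eq_dist_add_one_of_adj x hadj
    have hy := hT.dist_eq_dist_add_one_of_adj y hadj
    have tri := hT.connected.dist_triangle (u := x) (v := w) (w := y)
    have c1 := T.dist_comm (u := w) (v := y)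
    rcases hx with hx | hx <;> rcases hy with hy | hy
    · omega
    · have e1 := aux_edge hT hadj hy hw'
      have e2 := aux_edge hT hadj hy hx
      have c2 := T.dist_comm (u := y) (v := x)
      omega
    · have e1 := aux_edge hT hadj hx hw'
      have e2 := aux_edge hT hadj hx hy
      omega
    · have e1 := aux_edge hT hadj hx hw'
      omega

variable {G : Type*} [Group G] [MulAction G V]

theorem aux_isom (hT : IsTreeAction T G) (s : G) (x y : V) :
    T.dist (s • x) (s • y) = T.dist x y := by
  have key : ∀ (s : G) (x y : V), T.dist (s • x) (s • y) ≤ T.dist x y := by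
    intro s x y
    obtain ⟨P, hP⟩ := hT.1.connected.exists_walk_length_eq_dist x y
    have := SimpleGraph.dist_le (P.map (⟨fun v => s • v, fun {a b} h => hT.2.1 s a b h⟩ : T →g T))
    rw [SimpleGraph.Walk.length_map, hP] at this
    exact this
  apply le_antisymm (key s x y)
  have := key s⁻¹ (s • x) (s • y)
  simpa using this

theorem aux_min (g : G) (x : V) : transLen T g ≤ T.dist x (g • x) :=
  Nat.sInf_le ⟨x, rfl⟩

theorem aux_pos (hT : IsTreeAction T G) (g : G) (hg : ¬ Elliptic T g) {x : V}
    (hx : x ∈ Axis T g) : 0 < transLen T g := by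
  rcases Nat.eq_zero_or_pos (transLen T g) with h | h
  · exfalso
    have h1 : T.dist x (g • x) = transLen T g := hx
    rw [h] at h1
    exact hg ⟨x, (hT.1.connected.dist_eq_zero_iff.1 h1).symm⟩
  · exact h

theorem aux_two (hT : IsTreeAction T G) (g : G) (hg : ¬ Elliptic T g) {x : V}
    (hx : x ∈ Axis T g) : T.dist x (g • g • x) = 2 * transLen T g := by
  have hl := aux_pos hT g hg hx
  have hx1 : T.dist x (g • x) = transLen T g := hx
  have hne : x ≠ g • x := fun h => hg ⟨x, h.symm⟩
  obtain ⟨y, hxy, hy⟩ := aux_toward hT.1 hne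
  have hadj : T.Adj (g • x) (g • y) := hT.2.1 g _ _ hxy
  have hgg : T.dist (g • g • x) (g • x) = T.dist (g • g • x) (g • y) + 1 := by
    rw [aux_isom hT, aux_isom hT]; exact hy
  have c1 := T.dist_comm (u := g • x) (v := x)
  have c2 := T.dist_comm (u := g • g • x) (v := g • x)
  rw [aux_isom hT g x (g • x), hx1] at c2
  have hside := hT.1.dist_eq_dist_add_one_of_adj x hadj
  have goal_of : T.dist x (g • y) = T.dist x (g • x) + 1 →
      T.dist x (g • g • x) = 2 * transLen T g := by
    intro h
    have := aux_edge hT.1 hadj h hgg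
    omega
  rcases hside with h | h
  · exfalso
    have hy' := hT.1.dist_eq_dist_add_one_of_adj y hadj
    have hm := aux_min (T := T) g y
    have c3 := T.dist_comm (u := g • x) (v := y)
    rcases hy' with h' | h'
    · omega
    · have e := aux_edge hT.1 hadj h' h
      have e1 : T.dist x y = 1 := SimpleGraph.dist_eq_one_iff_adj.2 hxy
      have c4 := T.dist_comm (u := y) (v := x)
      have hy0 : g • x = y := hT.1.connected.dist_eq_zero_iff.1 (by omega)
      have hx0 : x = g • y := hT.1.connected.dist_eq_zero_iff.1 (by omega)
      exact hT.2.2 g x y hxy ⟨hy0, hx0.symm⟩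
  · exact goal_of h

theorem aux_pow (hT : IsTreeAction T G) (g : G) (hg : ¬ Elliptic T g) {x : V}
    (hx : x ∈ Axis T g) (n : ℕ) : T.dist x (g ^ n • x) = n * transLen T g ∧
      T.dist x (g ^ (n+1) • x) = (n + 1) * transLen T g := by
  have hl := aux_pos hT g hg hx
  have hx1 : T.dist x (g • x) = transLen T g := hx
  have h2 := aux_two hT g hg hx
  induction n with
  | zero => simp [hx1]
  | succ n ih =>
    refine ⟨ih.2, ?_⟩
    rcases Nat.eq_zero_or_pos n with rfl | hn
    · simpa [pow_succ, mul_smul] using h2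
    obtain ⟨i1, i2⟩ := ih
    have f := aux_four hT.1 x (g ^ (n+1) • x) (g • x) _ (g ^ (n+2) • x) rfl
    have e1 : T.dist (g • x) (g ^ (n+2) • x) = T.dist x (g ^ (n+1) • x) := by
      rw [pow_succ' g (n+1), mul_smul, aux_isom hT]
    have e2 : T.dist (g ^ (n+1) • x) (g ^ (n+2) • x) = T.dist x (g • x) := by
      rw [pow_succ g (n+1), mul_smul, aux_isom hT]
    have e3 : T.dist (g ^ (n+1) • x) (g • x) = T.dist x (g ^ n • x) := by
      rw [pow_succ' g n, mul_smul, aux_isom hT, T.dist_comm]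
    have tri := hT.1.connected.dist_triangle (u := x) (v := g ^ (n+1) • x) (w := g ^ (n+2) • x)
    rw [e1, e2, e3, i2, i1, hx1] at f
    rw [i2, e2, hx1] at tri
    have hh : (n + 1) * transLen T g = n * transLen T g + transLen T g := by ring
    have hh2 : ((n + 1 : ℕ) + 1) * transLen T g = n * transLen T g + 2 * transLen T g := by
      ring
    have hn' : transLen T g ≤ n * transLen T g := Nat.le_mul_of_pos_left _ hn
    show T.dist x (g ^ (n+2) • x) = _
    omega

theorem aux_evconst (u : ℕ → ℤ) (B : ℤ) (hB : ∀ n, B ≤ u n) (hu : Antitone u) :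
    ∃ c N, ∀ n, N ≤ n → u n = c := by
  have : ∃ N, ∀ n, u N ≤ u n := by
    obtain ⟨m, ⟨N, hN⟩, hm⟩ := Int.exists_least_of_bdd (P := fun z => ∃ n, u n = z)
      ⟨B, by rintro z ⟨n, rfl⟩; exact hB n⟩ ⟨u 0, 0, rfl⟩
    exact ⟨N, fun n => hN ▸ hm _ ⟨n, rfl⟩⟩
  obtain ⟨N, hN⟩ := this
  exact ⟨u N, N, fun n hn => le_antisymm (hu hn) (hN n)⟩

theorem aux_coord (hT : IsTreeAction T G) (g : G) (hg : ¬ Elliptic T g) {a x : V}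
    (ha : a ∈ Axis T g) (hx : x ∈ Axis T g) : ∃ c : ℤ, ∃ N : ℕ, ∀ n, N ≤ n →
      (T.dist a (g ^ n • x) : ℤ) = n * transLen T g + c ∧
      (T.dist x (g ^ n • a) : ℤ) = n * transLen T g - c := by
  have hl := aux_pos hT g hg hx
  have hgx : ∀ y ∈ Axis T g, T.dist y (g • y) = transLen T g := fun y hy => hy
  have mono : ∀ a ∈ Axis T g, ∀ x ∈ Axis T g, Antitone
      (fun n : ℕ => (T.dist a (g ^ n • x) : ℤ) - n * transLen T g) := by
    intro a ha x hx
    apply antitone_nat_of_succ_le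
    intro n
    have tri := hT.1.connected.dist_triangle (u := a) (v := g ^ n • x) (w := g ^ (n+1) • x)
    rw [pow_succ, mul_smul, aux_isom hT, hgx x hx] at tri
    rw [pow_succ, mul_smul]
    push_cast
    have : ((n:ℤ)+1) * transLen T g = n * transLen T g + transLen T g := by ring
    rw [this]
    omega
  have bdd : ∀ a ∈ Axis T g, ∀ x ∈ Axis T g, ∀ n : ℕ,
      -(T.dist a x : ℤ) ≤ (T.dist a (g ^ n • x) : ℤ) - n * transLen T g := by
    intro a ha x hx n
    have tri := hT.1.connected.dist_triangle (u := x) (v := a) (w := g ^ n • x)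
    rw [(aux_pow hT g hg hx n).1, T.dist_comm (u := x)] at tri
    zify at tri
    linarith
  obtain ⟨c, N1, h1⟩ := aux_evconst _ _ (bdd a ha x hx) (mono a ha x hx)
  obtain ⟨c', N2, h2⟩ := aux_evconst _ _ (bdd x hx a ha) (mono x hx a ha)
  have hcc : c + c' = 0 := by
    obtain ⟨n, hn⟩ : ∃ n, n = max N1 N2 + 1 := ⟨_, rfl⟩
    have u1 := h1 n (by omega)
    have u2 := h1 (n+1) (by omega)
    have u3 := h2 n (by omega)
    have u4 := h2 (n-1) (by omega)
    have e0 : T.dist a (g ^ (n + n) • a) = (n + n) * transLen T g := by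
      have := (aux_pow hT g hg ha (n+n)).1
      push_cast at this; exact this
    have e1 : T.dist (g ^ n • x) (g ^ (n + n) • a) = T.dist x (g ^ n • a) := by
      rw [pow_add, mul_smul, aux_isom hT]
    have e2 : T.dist (g ^ (n+1) • x) (g ^ (n + n) • a) = T.dist x (g ^ (n-1) • a) := by
      have : n + n = (n+1) + (n-1) := by omega
      rw [this, pow_add g (n+1), mul_smul, aux_isom hT]
    have e3 : T.dist (g ^ n • x) (g ^ (n+1) • x) = transLen T g := by
      rw [pow_succ, mul_smul, aux_isom hT, hgx x hx]
    have tri := hT.1.connected.dist_triangle (u := a) (v := g ^ n • x) (w := g ^ (n+n) • a)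
    have f := aux_four hT.1 a (g ^ (n+1) • x) (g ^ n • x) _ (g ^ (n+n) • a) rfl
    rw [T.dist_comm (u := g ^ (n+1) • x) (v := g ^ n • x), e3, e0, e1, e2] at f
    rw [e0, e1] at tri
    have hn1 : ((n - 1 : ℕ) : ℤ) = n - 1 := by omega
    simp only [hn1] at u4
    push_cast at u2
    zify at f tri
    have q1 : ((n:ℤ)+1) * transLen T g = n * transLen T g + transLen T g := by ring
    have q2 : ((n:ℤ)-1) * transLen T g = n * transLen T g - transLen T g := by ring
    have q3 : ((n:ℤ)+n) * transLen T g = n * transLen T g + n * transLen T g := by ring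
    rw [q1] at u2
    rw [q2] at u4
    rw [q3] at f tri
    omega
  refine ⟨c, max N1 N2, fun n hn => ⟨?_, ?_⟩⟩
  · have := h1 n (by omega)
    linarith
  · have := h2 n (by omega)
    linarith

theorem aux_axis_smul (hT : IsTreeAction T G) (g : G) {x : V} (hx : x ∈ Axis T g) :
    g • x ∈ Axis T g := by
  show T.dist _ _ = _
  rw [aux_isom hT]; exact hx

theorem aux_axis_inv (hT : IsTreeAction T G) (g : G) {x : V} (hx : x ∈ Axis T g) :
    g⁻¹ • x ∈ Axis T g := by
  show T.dist _ _ = _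
  rw [← aux_isom hT g]
  have h : T.dist x (g • x) = transLen T g := hx
  simpa using h

theorem aux_line (hT : IsTreeAction T G) (g : G) (hg : ¬ Elliptic T g) {a : V}
    (ha : a ∈ Axis T g) : ∃ f : V → ℤ,
      (∀ x ∈ Axis T g, f (g • x) = f x + transLen T g) ∧
      (∀ x ∈ Axis T g, ∀ y ∈ Axis T g, (T.dist x y : ℤ) = |f x - f y|) := by
  classical
  have H : ∀ x : V, ∃ c : ℤ, x ∈ Axis T g → ∃ N : ℕ, ∀ n, N ≤ n →
      (T.dist a (g ^ n • x) : ℤ) = n * transLen T g + c ∧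
      (T.dist x (g ^ n • a) : ℤ) = n * transLen T g - c := by
    intro x
    by_cases hx : x ∈ Axis T g
    · obtain ⟨c, h⟩ := aux_coord hT g hg ha hx
      exact ⟨c, fun _ => h⟩
    · exact ⟨0, fun h => absurd h hx⟩
  choose f hf using H
  refine ⟨f, ?_, ?_⟩
  · intro x hx
    obtain ⟨N, hN⟩ := hf x hx
    obtain ⟨M, hM⟩ := hf (g • x) (aux_axis_smul hT g hx)
    obtain ⟨n, hn⟩ : ∃ n, n = max N M := ⟨_, rfl⟩
    have h1 := (hN (n + 1) (by omega)).1
    have h2 := (hM n (by omega)).1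
    rw [pow_succ, mul_smul] at h1
    push_cast at h1
    rw [h1] at h2
    linarith
  · intro x hx y hy
    obtain ⟨N, hN⟩ := hf x hx
    obtain ⟨M, hM⟩ := hf y hy
    obtain ⟨x1, x2⟩ := hN (max N M) (by omega)
    obtain ⟨y1, y2⟩ := hM (max N M) (by omega)
    set n := max N M
    have e0 : T.dist a (g ^ (n + n) • a) = (n + n) * transLen T g := by
      have := (aux_pow hT g hg ha (n+n)).1
      push_cast at this; exact this
    have e1 : ∀ z, T.dist (g ^ n • z) (g ^ (n + n) • a) = T.dist z (g ^ n • a) := by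
      intro z
      rw [pow_add, mul_smul, aux_isom hT]
    have f4 := aux_four hT.1 (g ^ n • x) (g ^ n • y) a _ (g ^ (n+n) • a) rfl
    have t1 := hT.1.connected.dist_triangle (u := a) (v := g ^ n • x) (w := g ^ n • y)
    have t2 := hT.1.connected.dist_triangle (u := a) (v := g ^ n • y) (w := g ^ n • x)
    rw [aux_isom hT, e0, e1, e1, T.dist_comm (u := g ^ n • x) (v := a),
      T.dist_comm (u := g ^ n • y) (v := a)] at f4
    rw [aux_isom hT] at t1 t2
    rw [T.dist_comm (u := y) (v := x)] at t2
    zify at f4 t1 t2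
    have q3 : ((n:ℤ)+n) * transLen T g = n * transLen T g + n * transLen T g := by ring
    rw [q3] at f4
    rcases abs_cases (f x - f y) with ⟨h, _⟩ | ⟨h, _⟩ <;> rw [h] <;> omega

end TreeLemmas

section IntLemmas

def AuxSep (L : ℤ) (F : Finset ℤ) : Prop := ∀ a ∈ F, ∀ b ∈ F, a < b → a + L ≤ b

theorem aux_fin_to {n : ℕ} {L : ℤ} (hL : 0 < L) (P : Fin n → ℤ)
    (hP : ∀ i j, i < j → P i + L ≤ P j) :
    (Finset.univ.image P).card = n ∧ AuxSep L (Finset.univ.image P) := by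
  have hm : StrictMono P := fun i j h => by have := hP i j h; omega
  refine ⟨by rw [Finset.card_image_of_injective _ hm.injective]; simp, ?_⟩
  intro a ha b hb hab
  simp only [Finset.mem_image, Finset.mem_univ, true_and] at ha hb
  obtain ⟨i, rfl⟩ := ha
  obtain ⟨j, rfl⟩ := hb
  exact hP i j (hm.lt_iff_lt.1 hab)

def ISeg (S : Set ℤ) (L u w : ℤ) (n : ℕ) : Prop :=
  ∃ F : Finset ℤ, F.card = n ∧ (∀ a ∈ F, a ∈ S ∧ u ≤ a ∧ a + L ≤ w) ∧ AuxSep L F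

def ICirc (S : Set ℤ) (L l : ℤ) (n : ℕ) : Prop :=
  ∃ F : Finset ℤ, F.card = n ∧ (∀ a ∈ F, a ∈ S) ∧ AuxSep L F ∧ ∀ a ∈ F, ∀ b ∈ F, a + L ≤ b + l

theorem ISeg.le {S : Set ℤ} {L u w : ℤ} {n : ℕ} (hL : 0 < L) (h : ISeg S L u w n) :
    n ≤ (w - u).toNat := by
  obtain ⟨F, rfl, hF, -⟩ := h
  rw [← Int.card_Ico]
  apply Finset.card_le_card
  intro a ha
  have := hF a ha
  simp only [Finset.mem_Ico]
  omega

theorem ICirc.le {S : Set ℤ} {L l : ℤ} {n : ℕ} (hL : 0 < L) (h : ICirc S L l n) :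
    n ≤ l.toNat := by
  obtain ⟨F, rfl, hF, -, hF2⟩ := h
  rcases F.eq_empty_or_nonempty with rfl | hne
  · simp
  have hm := F.min'_mem hne
  have : F ⊆ Finset.Ico (F.min' hne) (F.min' hne + l) := by
    intro a ha
    have h1 := hF2 a ha _ hm
    have h2 := F.min'_le a ha
    simp only [Finset.mem_Ico]
    omega
  have := Finset.card_le_card this
  rw [Int.card_Ico] at this
  simpa using this

theorem aux_lower {S : Set ℤ} {L l : ℤ} (hL : 0 < L) {k : ℕ} (P : Fin (k+1) → ℤ)
    (hP : Monotone P) (hlast : P (Fin.last k) = P 0 + l) (c : Fin k → ℕ)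
    (hc : ∀ i, ISeg S L (P i.castSucc) (P i.succ) (c i)) : ICirc S L l (∑ i, c i) := by
  choose F hF1 hF2 hF3 using hc
  have hlt : ∀ i j, i < j → ∀ a ∈ F i, ∀ b ∈ F j, a + L ≤ b := by
    intro i j hij a ha b hb
    have h1 := (hF2 i a ha).2.2
    have h2 := (hF2 j b hb).2.1
    have : P i.succ ≤ P j.castSucc := hP (by
      rw [Fin.le_def]; simp; exact hij)
    omega
  refine ⟨Finset.univ.biUnion F, ?_, ?_, ?_, ?_⟩
  · rw [Finset.card_biUnion]
    · simp [hF1]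
    · intro i _ j _ hij
      rw [Function.onFun, Finset.disjoint_left]
      intro a ha hb
      rcases lt_or_gt_of_ne hij with h | h
      · have := hlt i j h a ha a hb; omega
      · have := hlt j i h a hb a ha; omega
  · intro a ha
    simp only [Finset.mem_biUnion, Finset.mem_univ, true_and] at ha
    obtain ⟨i, ha⟩ := ha
    exact (hF2 i a ha).1
  · intro a ha b hb hab
    simp only [Finset.mem_biUnion, Finset.mem_univ, true_and] at ha hb
    obtain ⟨i, ha⟩ := ha
    obtain ⟨j, hb⟩ := hb
    rcases lt_trichotomy i j with h | rfl | h
    · exact hlt i j h a ha b hb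
    · exact hF3 i a ha b hb hab
    · have := hlt j i h b hb a ha; omega
  · intro a ha b hb
    simp only [Finset.mem_biUnion, Finset.mem_univ, true_and] at ha hb
    obtain ⟨i, ha⟩ := ha
    obtain ⟨j, hb⟩ := hb
    have h1 := (hF2 i a ha).2.2
    have h2 := (hF2 j b hb).2.1
    have h3 : P i.succ ≤ P (Fin.last k) := hP (Fin.le_last _)
    have h4 : P 0 ≤ P j.castSucc := hP (Fin.zero_le _)
    omega

theorem aux_find {k : ℕ} (P : Fin (k+1) → ℤ) (a : ℤ) (h0 : P 0 ≤ a) (h1 : a < P (Fin.last k)) :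
    ∃ i : Fin k, P i.castSucc ≤ a ∧ a < P i.succ := by
  by_contra hcon
  push Not at hcon
  have : ∀ i : Fin (k+1), P i ≤ a := by
    intro i
    induction i using Fin.induction with
    | zero => exact h0
    | succ i ih => exact hcon i ih
  exact absurd (this (Fin.last k)) (by omega)

theorem aux_upper {S : Set ℤ} {L l : ℤ} (hL : 0 < L) (hl : 0 < l)
    (hS : ∀ m ∈ S, ∀ s : ℤ, m + s * l ∈ S) {k : ℕ} (P : Fin (k+1) → ℤ)
    (hlast : P (Fin.last k) = P 0 + l) (c : Fin k → ℕ)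
    (hc : ∀ i n, ISeg S L (P i.castSucc) (P i.succ) n → n ≤ c i) {n : ℕ} (hn : ICirc S L l n) :
    n ≤ k + ∑ i, c i := by
  classical
  obtain ⟨F, rfl, hF1, hF2, hF3⟩ := hn
  let r : ℤ → ℤ := fun a => a + (-((a - P 0) / l)) * l
  have hr : ∀ a, P 0 ≤ r a ∧ r a < P 0 + l := by
    intro a
    have h1 := Int.emod_nonneg (a - P 0) hl.ne'
    have h2 := Int.emod_lt_of_pos (a - P 0) hl
    have h3 := Int.emod_add_mul_ediv (a - P 0) l
    have h4 : r a = a - l * ((a - P 0) / l) := by simp only [r]; ring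
    constructor <;> omega
  have key : ∀ a ∈ F, ∀ b ∈ F, r a < r b → r a + L ≤ r b := by
    intro a ha b hb hab
    obtain ⟨s, hs⟩ : ∃ s : ℤ, r a - r b = a + s * l - b :=
      ⟨(b - P 0) / l - (a - P 0) / l, by simp only [r]; ring⟩
    have h1 := hF3 a ha b hb
    have h2 := hF3 b hb a ha
    rcases lt_trichotomy s 0 with h | rfl | h
    · have : s * l ≤ -l := by nlinarith
      omega
    · have := hF2 a ha b hb (by omega)
      omega
    · have : l ≤ s * l := by nlinarith
      omega
  have hinj : Set.InjOn r F := by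
    intro a ha b hb hab
    obtain ⟨s, hs⟩ : ∃ s : ℤ, r a - r b = a + s * l - b :=
      ⟨(b - P 0) / l - (a - P 0) / l, by simp only [r]; ring⟩
    have h1 := hF3 a ha b hb
    have h2 := hF3 b hb a ha
    rcases lt_trichotomy s 0 with h | rfl | h
    · have : s * l ≤ -l := by nlinarith
      omega
    · omega
    · have : l ≤ s * l := by nlinarith
      omega
  let F' : Fin k → Finset ℤ := fun i =>
    (F.image r).filter (fun a => P i.castSucc ≤ a ∧ a < P i.succ)
  have hsep : AuxSep L (F.image r) := by
    intro a ha b hb hab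
    obtain ⟨a', ha', rfl⟩ := Finset.mem_image.1 ha
    obtain ⟨b', hb', rfl⟩ := Finset.mem_image.1 hb
    exact key a' ha' b' hb' hab
  have hS' : ∀ a ∈ F.image r, a ∈ S := by
    intro a ha
    obtain ⟨a', ha', rfl⟩ := Finset.mem_image.1 ha
    exact hS a' (hF1 a' ha') _
  have hcov : F.image r ⊆ Finset.univ.biUnion F' := by
    intro a ha
    obtain ⟨b, hb, rfl⟩ := Finset.mem_image.1 ha
    obtain ⟨i, hi⟩ := aux_find P (r b) (hr b).1 (by rw [hlast]; exact (hr b).2)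
    simp only [Finset.mem_biUnion, Finset.mem_univ, true_and]
    exact ⟨i, Finset.mem_filter.2 ⟨ha, hi⟩⟩
  have hcard : ∀ i, (F' i).card ≤ 1 + c i := by
    intro i
    rcases (F' i).eq_empty_or_nonempty with h | h
    · simp [h]
    have hM := (F' i).max'_mem h
    have hseg : ISeg S L (P i.castSucc) (P i.succ) ((F' i).erase ((F' i).max' h)).card := by
      refine ⟨_, rfl, ?_, ?_⟩
      · intro a ha
        obtain ⟨hne, ha⟩ := Finset.mem_erase.1 ha
        have hlt := lt_of_le_of_ne ((F' i).le_max' a ha) hne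
        obtain ⟨m1, m2⟩ := Finset.mem_filter.1 hM
        obtain ⟨a1, a2⟩ := Finset.mem_filter.1 ha
        have := hsep a a1 _ m1 hlt
        exact ⟨hS' a a1, a2.1, by omega⟩
      · intro a ha b hb hab
        exact hsep a (Finset.mem_filter.1 (Finset.mem_erase.1 ha).2).1 b
          (Finset.mem_filter.1 (Finset.mem_erase.1 hb).2).1 hab
    have := hc i _ hseg
    rw [Finset.card_erase_of_mem hM] at this
    omega
  calc F.card = (F.image r).card := (Finset.card_image_of_injOn hinj).symm
    _ ≤ (Finset.univ.biUnion F').card := Finset.card_le_card hcov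
    _ ≤ ∑ i, (F' i).card := Finset.card_biUnion_le
    _ ≤ ∑ i, (1 + c i) := Finset.sum_le_sum (fun i _ => hcard i)
    _ = k + ∑ i, c i := by simp [Finset.sum_add_distrib]

end IntLemmas

section Conversion

variable {T : SimpleGraph V} {G : Type*} [Group G] [MulAction G V]

def AuxS (T : SimpleGraph V) {G : Type*} [Group G] [MulAction G V] (g : G) (γ : V × V)
    (f : V → ℤ) : Set ℤ :=
  {m | ∃ x ∈ Axis T g, ∃ y ∈ Axis T g, (∃ s : G, s • γ.1 = x ∧ s • γ.2 = y) ∧ f x = m ∧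
    f y = m + T.dist γ.1 γ.2}

theorem aux_ahead (hT : IsTreeAction T G) (g : G) (hl : 0 < transLen T g) (f : V → ℤ)
    (f1 : ∀ x ∈ Axis T g, f (g • x) = f x + transLen T g)
    (f2 : ∀ x ∈ Axis T g, ∀ y ∈ Axis T g, (T.dist x y : ℤ) = |f x - f y|)
    {x y : V} (hx : x ∈ Axis T g) (hy : y ∈ Axis T g) : Ahead T g x y ↔ f x ≤ f y := by
  unfold Ahead
  have h1 := f2 x hx y hy
  have h2 := f2 x hx _ (aux_axis_smul hT g hy)
  rw [f1 y hy] at h2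
  zify
  rw [h1, h2]
  rcases abs_cases (f x - f y) with ⟨h, _⟩ | ⟨h, _⟩ <;>
  rcases abs_cases (f x - (f y + transLen T g)) with ⟨h', _⟩ | ⟨h', _⟩ <;> rw [h, h'] <;> omega

theorem aux_onseg (g : G) (f : V → ℤ)
    (f2 : ∀ x ∈ Axis T g, ∀ y ∈ Axis T g, (T.dist x y : ℤ) = |f x - f y|)
    {x y z : V} (hx : x ∈ Axis T g) (hy : y ∈ Axis T g) (hz : z ∈ Axis T g) (hxz : f x ≤ f z) :
    OnSeg T x y z ↔ f x ≤ f y ∧ f y ≤ f z := by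
  unfold OnSeg
  have h1 := f2 x hx y hy
  have h2 := f2 y hy z hz
  have h3 := f2 x hx z hz
  zify
  rw [h1, h2, h3]
  rcases abs_cases (f x - f y) with ⟨h, _⟩ | ⟨h, _⟩ <;>
  rcases abs_cases (f y - f z) with ⟨h', _⟩ | ⟨h', _⟩ <;>
  rcases abs_cases (f x - f z) with ⟨h'', _⟩ | ⟨h'', _⟩ <;> rw [h, h', h''] <;> omega

theorem aux_mem_axis (hT : IsTreeAction T G) (g : G) {u x : V} (hu : u ∈ Axis T g)
    (hx : OnSeg T u x (g • u)) : x ∈ Axis T g := by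
  have h0 : T.dist u (g • u) = transLen T g := hu
  unfold OnSeg at hx
  have h1 := aux_min (T := T) g x
  have h2 := hT.1.connected.dist_triangle (u := x) (v := g • u) (w := g • x)
  rw [aux_isom hT] at h2
  show T.dist _ _ = _
  omega

theorem aux_seg_axis (hT : IsTreeAction T G) (g : G) (f : V → ℤ)
    (f1 : ∀ x ∈ Axis T g, f (g • x) = f x + transLen T g)
    (f2 : ∀ x ∈ Axis T g, ∀ y ∈ Axis T g, (T.dist x y : ℤ) = |f x - f y|)
    {u w x : V} (hu : u ∈ Axis T g) (hw : w ∈ Axis T g) (huw : f u ≤ f w)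
    (hwu : f w ≤ f u + transLen T g) (hx : OnSeg T u x w) : x ∈ Axis T g := by
  apply aux_mem_axis hT g hu
  have h1 := (aux_onseg g f f2 hu hw (aux_axis_smul hT g hu) (by rw [f1 u hu]; omega)).2
    ⟨huw, by rw [f1 u hu]; exact hwu⟩
  unfold OnSeg at *
  have t1 := hT.1.connected.dist_triangle (u := x) (v := w) (w := g • u)
  have t2 := hT.1.connected.dist_triangle (u := u) (v := x) (w := g • u)
  omega

theorem aux_copy_len (hT : IsTreeAction T G) {γ : V × V} {x y : V}
    (h : ∃ s : G, s • γ.1 = x ∧ s • γ.2 = y) : T.dist x y = T.dist γ.1 γ.2 := by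
  obtain ⟨s, rfl, rfl⟩ := h
  exact aux_isom hT s _ _

theorem aux_S_of (hT : IsTreeAction T G) (g : G) (γ : V × V) (f : V → ℤ)
    (f2 : ∀ x ∈ Axis T g, ∀ y ∈ Axis T g, (T.dist x y : ℤ) = |f x - f y|)
    {x y : V} (hx : x ∈ Axis T g) (hy : y ∈ Axis T g)
    (h : ∃ s : G, s • γ.1 = x ∧ s • γ.2 = y) (hxy : f x ≤ f y) :
    f x ∈ AuxS T g γ f ∧ f y = f x + T.dist γ.1 γ.2 := by
  have h1 := f2 x hx y hy
  rw [aux_copy_len hT h] at h1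
  have : f y = f x + T.dist γ.1 γ.2 := by
    rw [h1]
    rcases abs_cases (f x - f y) with ⟨h, _⟩ | ⟨h, _⟩ <;> rw [h] <;> omega
  exact ⟨⟨x, hx, y, hy, h, rfl, this⟩, this⟩

theorem aux_segCopies (hT : IsTreeAction T G) (g : G) (γ : V × V)
    (hL : 0 < T.dist γ.1 γ.2) (f : V → ℤ)
    (f1 : ∀ x ∈ Axis T g, f (g • x) = f x + transLen T g)
    (f2 : ∀ x ∈ Axis T g, ∀ y ∈ Axis T g, (T.dist x y : ℤ) = |f x - f y|)
    {u w : V} (hu : u ∈ Axis T g) (hw : w ∈ Axis T g) (huw : f u ≤ f w)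
    (hwu : f w ≤ f u + transLen T g) (n : ℕ) :
    SegCopies T G γ u w n ↔ ISeg (AuxS T g γ f) (T.dist γ.1 γ.2) (f u) (f w) n := by
  have hL' : (0:ℤ) < T.dist γ.1 γ.2 := by exact_mod_cast hL
  constructor
  · rintro ⟨p, q, h1, h2⟩
    have hq : ∀ i, q i ∈ Axis T g := fun i =>
      aux_seg_axis hT g f f1 f2 hu hw huw hwu (h1 i).2.2
    have hfq : ∀ i, f u ≤ f (q i) ∧ f (q i) ≤ f w := fun i =>
      (aux_onseg g f f2 hu (hq i) hw huw).1 (h1 i).2.2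
    have hp : ∀ i, p i ∈ Axis T g := fun i =>
      aux_seg_axis hT g f f1 f2 hu (hq i) (hfq i).1 ((hfq i).2.trans hwu) (h1 i).2.1
    have hfp : ∀ i, f u ≤ f (p i) ∧ f (p i) ≤ f (q i) := fun i =>
      (aux_onseg g f f2 hu (hp i) (hq i) (hfq i).1).1 (h1 i).2.1
    have hS := fun i => aux_S_of hT g γ f f2 (hp i) (hq i) (h1 i).1 (hfp i).2
    obtain ⟨c1, c2⟩ := aux_fin_to hL' (fun i => f (p i)) (by
      intro i j hij
      have := (aux_onseg g f f2 hu (hq i) (hp j) (hfp j).1).1 (h2 i j hij)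
      have := (hS i).2
      omega)
    refine ⟨_, c1, ?_, c2⟩
    intro a ha
    simp only [Finset.mem_image, Finset.mem_univ, true_and] at ha
    obtain ⟨i, rfl⟩ := ha
    exact ⟨(hS i).1, (hfp i).1, by rw [← (hS i).2]; exact (hfq i).2⟩
  · rintro ⟨F, hF, h1, h2⟩
    have hm : ∀ i, F.orderEmbOfFin hF i ∈ F := fun i => F.orderEmbOfFin_mem hF i
    choose p hp q hq hs hfp hfq using fun i => (h1 _ (hm i)).1
    refine ⟨p, q, ?_, ?_⟩
    · intro i
      have := h1 _ (hm i)
      have e1 := hfp i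
      have e2 := hfq i
      refine ⟨hs i, (aux_onseg g f f2 hu (hp i) (hq i) (by omega)).2 (by omega),
        (aux_onseg g f f2 hu (hq i) hw huw).2 (by omega)⟩
    · intro i j hij
      have := h1 _ (hm i)
      have := h1 _ (hm j)
      have e1 := hfp j
      have e2 := hfq i
      have := h2 _ (hm i) _ (hm j) ((F.orderEmbOfFin hF).lt_iff_lt.2 hij)
      exact (aux_onseg g f f2 hu (hq i) (hp j) (by omega)).2 (by omega)

theorem aux_circCopies (hT : IsTreeAction T G) (g : G) (hl : 0 < transLen T g) (γ : V × V)
    (hL : 0 < T.dist γ.1 γ.2) (f : V → ℤ)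
    (f1 : ∀ x ∈ Axis T g, f (g • x) = f x + transLen T g)
    (f2 : ∀ x ∈ Axis T g, ∀ y ∈ Axis T g, (T.dist x y : ℤ) = |f x - f y|) (n : ℕ) :
    CircCopies T g γ n ↔ ICirc (AuxS T g γ f) (T.dist γ.1 γ.2) (transLen T g) n := by
  have hL' : (0:ℤ) < T.dist γ.1 γ.2 := by exact_mod_cast hL
  constructor
  · rintro ⟨p, q, h1, h2, h3⟩
    have hp := fun i => (h1 i).1
    have hq := fun i => (h1 i).2.1
    have hpq := fun i => (aux_ahead hT g hl f f1 f2 (hp i) (hq i)).1 (h1 i).2.2.2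
    have hS := fun i => aux_S_of hT g γ f f2 (hp i) (hq i) (h1 i).2.2.1 (hpq i)
    obtain ⟨c1, c2⟩ := aux_fin_to hL' (fun i => f (p i)) (by
      intro i j hij
      have := (aux_ahead hT g hl f f1 f2 (hq i) (hp j)).1 (h2 i j hij)
      have := (hS i).2
      omega)
    refine ⟨_, c1, ?_, c2, ?_⟩
    · intro a ha
      simp only [Finset.mem_image, Finset.mem_univ, true_and] at ha
      obtain ⟨i, rfl⟩ := ha
      exact (hS i).1
    · intro a ha b hb
      simp only [Finset.mem_image, Finset.mem_univ, true_and] at ha hb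
      obtain ⟨i, rfl⟩ := ha
      obtain ⟨j, rfl⟩ := hb
      have := (aux_ahead hT g hl f f1 f2 (hq i) (aux_axis_smul hT g (hp j))).1 (h3 i j)
      rw [f1 _ (hp j), (hS i).2] at this
      exact this
  · rintro ⟨F, hF, h1, h2, h3⟩
    have hm : ∀ i, F.orderEmbOfFin hF i ∈ F := fun i => F.orderEmbOfFin_mem hF i
    choose p hp q hq hs hfp hfq using fun i => (h1 _ (hm i))
    refine ⟨p, q, ?_, ?_, ?_⟩
    · intro i
      have e1 := hfp i
      have e2 := hfq i
      exact ⟨hp i, hq i, hs i, (aux_ahead hT g hl f f1 f2 (hp i) (hq i)).2 (by omega)⟩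
    · intro i j hij
      have e1 := hfp j
      have e2 := hfq i
      have := h2 _ (hm i) _ (hm j) ((F.orderEmbOfFin hF).lt_iff_lt.2 hij)
      exact (aux_ahead hT g hl f f1 f2 (hq i) (hp j)).2 (by omega)
    · intro i j
      have e1 := hfp j
      have e2 := hfq i
      have := h3 _ (hm i) _ (hm j)
      refine (aux_ahead hT g hl f f1 f2 (hq i) (aux_axis_smul hT g (hp j))).2 ?_
      rw [f1 _ (hp j)]
      omega

theorem aux_S_shift (hT : IsTreeAction T G) (g : G) (γ : V × V) (f : V → ℤ)
    (f1 : ∀ x ∈ Axis T g, f (g • x) = f x + transLen T g) :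
    ∀ m ∈ AuxS T g γ f, ∀ s : ℤ, m + s * transLen T g ∈ AuxS T g γ f := by
  have up : ∀ m ∈ AuxS T g γ f, m + transLen T g ∈ AuxS T g γ f := by
    rintro m ⟨x, hx, y, hy, ⟨t, rfl, rfl⟩, h1, h2⟩
    refine ⟨_, aux_axis_smul hT g hx, _, aux_axis_smul hT g hy,
      ⟨g * t, mul_smul _ _ _, mul_smul _ _ _⟩, ?_, ?_⟩
    · rw [f1 _ hx, h1]
    · rw [f1 _ hy, h2]; ring
  have down : ∀ m ∈ AuxS T g γ f, m - transLen T g ∈ AuxS T g γ f := by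
    rintro m ⟨x, hx, y, hy, ⟨t, rfl, rfl⟩, h1, h2⟩
    have a1 := f1 _ (aux_axis_inv hT g hx)
    have a2 := f1 _ (aux_axis_inv hT g hy)
    rw [smul_inv_smul] at a1 a2
    refine ⟨_, aux_axis_inv hT g hx, _, aux_axis_inv hT g hy,
      ⟨g⁻¹ * t, mul_smul _ _ _, mul_smul _ _ _⟩, ?_, ?_⟩
    · omega
    · omega
  intro m hm s
  induction s using Int.induction_on with
  | zero => simpa using hm
  | succ i ih =>
    have := up _ ih
    rw [show m + ((i:ℤ) + 1) * transLen T g = m + i * transLen T g + transLen T g by ring]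
    exact this
  | pred i ih =>
    have := down _ ih
    rw [show m + (-(i:ℤ) - 1) * transLen T g = m + (-i) * transLen T g - transLen T g by ring]
    exact this

theorem aux_sSup_zero (Q : ℕ → Prop) (h : ∀ n, 0 < n → Q n → ∀ m, Q m) :
    sSup {n : ℕ | Q n} = 0 := by
  by_cases hh : ∃ n, 0 < n ∧ Q n
  · obtain ⟨n, h1, h2⟩ := hh
    apply Nat.sSup_of_not_bddAbove
    rintro ⟨B, hB⟩
    have := hB (show B + 1 ∈ {n : ℕ | Q n} from h n h1 h2 (B+1))
    omega
  · push Not at hh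
    have : sSup {n : ℕ | Q n} ≤ 0 := by
      rcases Set.eq_empty_or_nonempty {n : ℕ | Q n} with h | h
      · rw [h]; simp
      · refine csSup_le h ?_
        intro b hb
        by_contra hb'
        exact hh b (by omega) hb
    omega

theorem aux_cSeg_zero (γ : V × V) (hγ : γ.1 = γ.2) (u w : V) : cSeg T G γ u w = 0 := by
  apply aux_sSup_zero
  rintro n hn ⟨p, q, h1, -⟩ m
  obtain ⟨⟨s, hs1, hs2⟩, -, h3⟩ := h1 ⟨0, hn⟩
  refine ⟨fun _ => q ⟨0, hn⟩, fun _ => q ⟨0, hn⟩, fun i => ⟨⟨s, by rw [hγ, hs2], hs2⟩, ?_, h3⟩, ?_⟩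
  · simp [OnSeg]
  · intro i j _; simp [OnSeg]

theorem aux_cCirc_zero (g : G) (γ : V × V) (hγ : γ.1 = γ.2) : cCirc T g γ = 0 := by
  apply aux_sSup_zero
  rintro n hn ⟨p, q, h1, -, h3⟩ m
  obtain ⟨hp, hq, ⟨s, hs1, hs2⟩, h4⟩ := h1 ⟨0, hn⟩
  have hpq : p ⟨0, hn⟩ = q ⟨0, hn⟩ := by rw [← hs1, ← hs2, hγ]
  have h5 := h3 ⟨0, hn⟩ ⟨0, hn⟩
  rw [hpq] at h4 h5
  exact ⟨fun _ => q ⟨0, hn⟩, fun _ => q ⟨0, hn⟩,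
    fun i => ⟨hq, hq, ⟨s, by rw [hγ, hs2], hs2⟩, h4⟩, fun i j _ => h4, fun i j => h5⟩

end Conversion

/-- Counting lemma: if a fundamental domain for the hyperbolic element `g` is a
concatenation of non-overlapping coherently oriented segments `α₁, …, α_k` (given by
consecutive points `p 0, …, p k` along the axis with `p k = g • p 0`), then for any
oriented segment `γ`,  `Σᵢ c_γ(αᵢ) ≤ c_γ(g) ≤ k + Σᵢ c_γ(αᵢ)`. -/
theorem cCirc_juncture_bounds {V : Type*} (T : SimpleGraph V) {G : Type*} [Group G]
    [MulAction G V] (hT : IsTreeAction T G)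
    (g : G) (hg : ¬ Elliptic T g) (γ : V × V)
    (k : ℕ) (hk : 0 < k) (p : Fin (k + 1) → V)
    (hax : ∀ i, p i ∈ Axis T g)
    (hlast : p (Fin.last k) = g • p 0)
    (hord : ∀ i j : Fin (k + 1), i ≤ j → Ahead T g (p i) (p j)) :
    (∑ i : Fin k, cSeg T G γ (p i.castSucc) (p i.succ)) ≤ cCirc T g γ ∧
      cCirc T g γ ≤ k + ∑ i : Fin k, cSeg T G γ (p i.castSucc) (p i.succ) := by
  rcases Nat.eq_zero_or_pos (T.dist γ.1 γ.2) with hL | hL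
  · have hγ : γ.1 = γ.2 := hT.1.connected.dist_eq_zero_iff.1 hL
    rw [aux_cCirc_zero g γ hγ]
    simp [aux_cSeg_zero γ hγ]
  have hl := aux_pos hT g hg (hax 0)
  obtain ⟨f, f1, f2⟩ := aux_line hT g hg (hax 0)
  have hL' : (0:ℤ) < T.dist γ.1 γ.2 := by exact_mod_cast hL
  have hl' : (0:ℤ) < transLen T g := by exact_mod_cast hl
  have hmono : Monotone (fun i => f (p i)) := fun i j hij =>
    (aux_ahead hT g hl f f1 f2 (hax i) (hax j)).1 (hord i j hij)
  have hlast' : f (p (Fin.last k)) = f (p 0) + transLen T g := by rw [hlast, f1 _ (hax 0)]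
  have hseg : ∀ (i : Fin k) (n : ℕ), SegCopies T G γ (p i.castSucc) (p i.succ) n ↔
      ISeg (AuxS T g γ f) (T.dist γ.1 γ.2) (f (p i.castSucc)) (f (p i.succ)) n := by
    intro i n
    have h1 : f (p i.castSucc) ≤ f (p i.succ) := hmono (Fin.castSucc_lt_succ).le
    have h2 : f (p 0) ≤ f (p i.castSucc) := hmono (Fin.zero_le _)
    have h3 : f (p i.succ) ≤ f (p (Fin.last k)) := hmono (Fin.le_last _)
    exact aux_segCopies hT g γ hL f f1 f2 (hax _) (hax _) h1 (by omega) n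
  have hcirc := aux_circCopies hT g hl γ hL f f1 f2
  have segBdd : ∀ i : Fin k, BddAbove {n | SegCopies T G γ (p i.castSucc) (p i.succ) n} :=
    fun i => ⟨_, fun n hn => ISeg.le hL' ((hseg i n).1 hn)⟩
  have circBdd : BddAbove {n | CircCopies T g γ n} :=
    ⟨_, fun n hn => ICirc.le hL' ((hcirc n).1 hn)⟩
  constructor
  · apply le_csSup circBdd
    refine (hcirc _).2 (aux_lower hL' (fun i => f (p i)) hmono hlast' _ ?_)
    intro i
    refine (hseg i _).1 (Nat.sSup_mem (s := {n | SegCopies T G γ (p i.castSucc) (p i.succ) n})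
      ⟨0, ?_⟩ (segBdd i))
    exact ⟨Fin.elim0, Fin.elim0, fun i => i.elim0, fun i => i.elim0⟩
  · refine csSup_le ⟨0, Fin.elim0, Fin.elim0, fun i => i.elim0, fun i => i.elim0,
      fun i => i.elim0⟩ ?_
    intro n hn
    exact aux_upper hL' hl' (aux_S_shift hT g γ f f1) (fun i => f (p i)) hlast' _
      (fun i m hm => le_csSup (segBdd i) ((hseg i m).2 hm)) ((hcirc n).1 hn)
end

section
/- Let G act on a simplicial tree T and let γ be an oriented segment in T. Then the counting function f_γ : G → ℝ, defined by f_γ(g) = c_γ(g) − c_{γ̄}(g) (where c_γ(g) counts maximal non-overlapping positively oriented copies of γ in T_g/⟨g⟩ for hyperbolic g, and is 0 for elliptic g, and γ̄ is γ with reversed orientation), is a quasimorphism on G with defect at most 6. -/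
set_option linter.unusedVariables false

variable {V : Type*}

open scoped Classical in
/-- The counting function `f_γ(g) = c_γ(g) − c_{γ̄}(g)` (zero on elliptic elements),
where `γ̄` is the reverse of `γ`. -/
noncomputable def fCount (T : SimpleGraph V) (G : Type*) [Group G] [MulAction G V]
    (γ : V × V) (g : G) : ℝ :=
  if Elliptic T g then 0
  else (cCirc T g γ : ℝ) - (cCirc T g (γ.2, γ.1) : ℝ)


section TreeHelpers

theorem tr_tri {T : SimpleGraph V} (hT : T.IsTree) (a b c : V) :
    T.dist a c ≤ T.dist a b + T.dist b c := hT.connected.dist_triangle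

theorem tr_comm {T : SimpleGraph V} (a b : V) : T.dist a b = T.dist b a :=
  SimpleGraph.dist_comm

theorem tr_eq {T : SimpleGraph V} (hT : T.IsTree) {a b : V} (h : T.dist a b = 0) : a = b :=
  hT.connected.dist_eq_zero_iff.1 h

theorem tr_next {T : SimpleGraph V} (hT : T.IsTree) {u v : V} (h : u ≠ v) :
    ∃ u', T.Adj u u' ∧ T.dist u v = T.dist u' v + 1 := by
  obtain ⟨p, hp⟩ := hT.connected.exists_walk_length_eq_dist u v
  cases p with
  | nil => exact absurd rfl h
  | @cons _ w _ hadj q =>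
    refine ⟨w, hadj, ?_⟩
    have h1 := SimpleGraph.dist_le q
    have h2 := tr_tri hT u w v
    have h3 : T.dist u w = 1 := SimpleGraph.dist_eq_one_iff_adj.2 hadj
    simp at hp
    omega

theorem tr_uniq {T : SimpleGraph V} (hT : T.IsTree) {u v a b : V} (ha : T.Adj u a)
    (hb : T.Adj u b) (h1 : T.dist u v = T.dist a v + 1) (h2 : T.dist u v = T.dist b v + 1) :
    a = b := by
  obtain ⟨p, hp⟩ := hT.connected.exists_walk_length_eq_dist a v
  obtain ⟨q, hq⟩ := hT.connected.exists_walk_length_eq_dist b v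
  have hp' := SimpleGraph.Walk.isPath_of_length_eq_dist (SimpleGraph.Walk.cons ha p)
    (by simp; omega)
  have hq' := SimpleGraph.Walk.isPath_of_length_eq_dist (SimpleGraph.Walk.cons hb q)
    (by simp; omega)
  have := (hT.existsUnique_path u v).unique hp' hq'
  simp at this
  exact this.1

theorem tr_edge {T : SimpleGraph V} (hT : T.IsTree) {u u' v : V} (hadj : T.Adj u u')
    (hv : T.dist u v = T.dist u' v + 1) : ∀ n : ℕ, ∀ w, T.dist u w = n →
    T.dist u' w = T.dist u w + 1 →
    T.dist v w = T.dist v u' + 1 + T.dist u w := by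
  intro n
  induction n using Nat.strong_induction_on with
  | _ n ih =>
  intro w hn hw
  by_cases h0 : n = 0
  · have : u = w := tr_eq hT (by omega)
    subst this
    have h1 := tr_comm (T := T) u v
    have h2 := tr_comm (T := T) u' v
    omega
  · have hne : w ≠ u := by
      rintro rfl
      simp at hn; omega
    obtain ⟨w', hw', hd⟩ := tr_next hT hne
    have e1 := tr_comm (T := T) w u
    have e2 := tr_comm (T := T) w' u
    have hww : T.dist w' w = 1 := SimpleGraph.dist_eq_one_iff_adj.2 hw'.symm
    have huu : T.dist u' u = 1 := SimpleGraph.dist_eq_one_iff_adj.2 hadj.symm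
    have e3 := tr_tri hT u' w' w
    have e4 := tr_tri hT u' u w'
    have I := ih (n - 1) (by omega) w' (by omega) (by omega)
    rcases hT.dist_eq_dist_add_one_of_adj v hw' with h | h
    · omega
    · exfalso
      by_cases hw0 : w' = u
      · subst hw0
        have : u' = w := tr_uniq hT (v := v) hadj hw'.symm hv (by
          have := tr_comm (T := T) w' v
          have := tr_comm (T := T) w v
          omega)
        subst this
        simp at hw
      · obtain ⟨w2, hw2, hd2⟩ := tr_next hT hw0
        have f1 := tr_comm (T := T) w2 u
        have hww2 : T.dist w2 w' = 1 := SimpleGraph.dist_eq_one_iff_adj.2 hw2.symm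
        have f3 := tr_tri hT u' w2 w'
        have f4 := tr_tri hT u' u w2
        have I2 := ih (n - 2) (by omega) w2 (by omega) (by omega)
        have : w2 = w := tr_uniq hT (v := v) hw2 hw'.symm (by
          have := tr_comm (T := T) w' v
          have := tr_comm (T := T) w2 v
          omega) (by
          have := tr_comm (T := T) w' v
          have := tr_comm (T := T) w v
          omega)
        subst this
        omega

theorem tr_four {T : SimpleGraph V} (hT : T.IsTree) (y w z : V) : ∀ n : ℕ, ∀ x,
    T.dist x z = n →
    T.dist x z + T.dist y w ≤ T.dist x y + T.dist z w ∨
    T.dist x z + T.dist y w ≤ T.dist x w + T.dist y z := by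
  intro n
  induction n with
  | zero =>
    intro x hx
    left
    have : x = z := tr_eq hT hx
    subst this
    have := tr_tri hT y x w
    have := tr_comm (T := T) y x
    omega
  | succ n ih =>
    intro x hx
    have hne : x ≠ z := by
      rintro rfl
      simp at hx
    obtain ⟨x1, hx1, hd⟩ := tr_next hT hne
    have I := ih x1 (by omega)
    have c1 := tr_comm (T := T) x z
    have c1' := tr_comm (T := T) x1 z
    have c2 := tr_comm (T := T) x y
    have c2' := tr_comm (T := T) x1 y
    have c3 := tr_comm (T := T) x w
    have c3' := tr_comm (T := T) x1 w
    have c4 := tr_comm (T := T) y z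
    have c5 := tr_comm (T := T) y w
    rcases hT.dist_eq_dist_add_one_of_adj y hx1 with hy | hy <;>
    rcases hT.dist_eq_dist_add_one_of_adj w hx1 with hw | hw
    · omega
    · have a1 := tr_edge hT hx1 (v := z) hd _ w rfl (by omega)
      have a2 := tr_edge hT hx1 (v := y) (by omega) _ w rfl (by omega)
      omega
    · have a1 := tr_edge hT hx1 (v := z) hd _ y rfl (by omega)
      have a2 := tr_edge hT hx1 (v := w) (by omega) _ y rfl (by omega)
      omega
    · have a1 := tr_edge hT hx1 (v := z) hd _ y rfl (by omega)
      have a2 := tr_edge hT hx1 (v := z) hd _ w rfl (by omega)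
      have := tr_tri hT y x w
      omega

/-- four point condition -/
theorem tr_4 {T : SimpleGraph V} (hT : T.IsTree) (x z y w : V) :
    T.dist x z + T.dist y w ≤ T.dist x y + T.dist z w ∨
    T.dist x z + T.dist y w ≤ T.dist x w + T.dist y z := tr_four hT y w z _ x rfl

theorem tr_coord {T : SimpleGraph V} (hT : T.IsTree) {u v a b : V} (ha : OnSeg T u a v)
    (hb : OnSeg T u b v) :
    T.dist a b + T.dist u a = T.dist u b ∨ T.dist a b + T.dist u b = T.dist u a := by
  unfold OnSeg at *
  have h := tr_4 hT u v a b
  have h1 := tr_tri hT u a b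
  have h2 := tr_tri hT u b a
  have := tr_comm (T := T) a b
  have := tr_comm (T := T) v b
  omega

theorem tr_concat {T : SimpleGraph V} (hT : T.IsTree) {x y z w : V} (h1 : OnSeg T x y z)
    (h2 : OnSeg T y z w) (hne : y ≠ z) :
    T.dist x w = T.dist x y + T.dist y z + T.dist z w := by
  unfold OnSeg at *
  have h := tr_4 hT x z y w
  have h3 := tr_tri hT x z w
  have : T.dist y z ≠ 0 := fun h => hne (tr_eq hT h)
  omega

theorem tr_median {T : SimpleGraph V} (hT : T.IsTree) (b c : V) : ∀ n : ℕ, ∀ a,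
    T.dist a b = n → ∃ m, OnSeg T a m b ∧ OnSeg T b m c ∧ OnSeg T a m c := by
  intro n
  induction n with
  | zero =>
    intro a ha
    have := tr_eq hT ha
    subst this
    exact ⟨a, by simp [OnSeg], by simp [OnSeg], by simp [OnSeg]⟩
  | succ n ih =>
    intro a ha
    by_cases hs : OnSeg T b a c
    · exact ⟨a, by simp [OnSeg], hs, by simp [OnSeg]⟩
    have hne : a ≠ b := by
      rintro rfl
      simp at ha
    obtain ⟨a', ha', hd⟩ := tr_next hT hne
    obtain ⟨m, h1, h2, h3⟩ := ih a' (by omega)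
    have haa : T.dist a a' = 1 := SimpleGraph.dist_eq_one_iff_adj.2 ha'
    unfold OnSeg at *
    have e1 := tr_tri hT a a' m
    have e2 := tr_tri hT a m b
    have e3 := tr_tri hT a m c
    have e4 := tr_tri hT b a c
    have e5 := tr_tri hT a a' c
    have f := tr_4 hT a b a' c
    have c1 := tr_comm (T := T) a b
    have c2 := tr_comm (T := T) c b
    have c3 := tr_comm (T := T) c a
    have c4 := tr_comm (T := T) c a'
    have f' := hT.dist_eq_dist_add_one_of_adj c ha'
    refine ⟨m, by omega, by omega, by omega⟩

end TreeHelpers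

section ActHelpers

variable {G : Type*} [Group G] [MulAction G V]

theorem ac_dist {T : SimpleGraph V} (hT : IsTreeAction T G) (g : G) (u v : V) :
    T.dist (g • u) (g • v) = T.dist u v := by
  have key : ∀ (g : G) (u v : V), T.dist (g • u) (g • v) ≤ T.dist u v := by
    intro g u v
    obtain ⟨p, hp⟩ := hT.1.connected.exists_walk_length_eq_dist u v
    let φ : T →g T := ⟨fun x => g • x, fun {a b} h => hT.2.1 g a b h⟩
    have := SimpleGraph.dist_le (p.map φ)
    rw [SimpleGraph.Walk.length_map, hp] at this
    exact this
  apply le_antisymm (key g u v)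
  have := key g⁻¹ (g • u) (g • v)
  simpa using this

theorem ac_min {T : SimpleGraph V} (g : G) (x : V) :
    transLen T g ≤ T.dist x (g • x) := Nat.sInf_le ⟨x, rfl⟩

theorem ac_axis {T : SimpleGraph V} {g : G} {x : V} (h : T.dist x (g • x) ≤ transLen T g) :
    x ∈ Axis T g := le_antisymm h (ac_min g x)

theorem ac_exists {T : SimpleGraph V} (hT : IsTreeAction T G) (g : G) :
    ∃ x, x ∈ Axis T g := by
  obtain ⟨x⟩ := hT.1.connected.nonempty
  have := Nat.sInf_mem (s := {n : ℕ | ∃ v : V, T.dist v (g • v) = n}) ⟨_, x, rfl⟩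
  exact this

theorem ac_dich {T : SimpleGraph V} (hT : IsTreeAction T G) (g : G) (x : V) (hx : x ≠ g • x) :
    (∃ x', T.Adj x x' ∧ T.dist x (g • x) = T.dist x' (g • x') + 2 ∧
      T.dist x (g • x) = T.dist x' (g • x) + 1 ∧ T.dist x (g • x) = T.dist x (g • x') + 1) ∨
    T.dist x (g • g • x) = 2 * T.dist x (g • x) := by
  obtain ⟨x', ha, hd⟩ := tr_next hT.1 hx
  have hga := hT.2.1 g _ _ ha
  have a1 : T.dist x x' = 1 := SimpleGraph.dist_eq_one_iff_adj.2 ha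
  have a2 : T.dist (g • x) (g • x') = 1 := SimpleGraph.dist_eq_one_iff_adj.2 hga
  rcases hT.1.dist_eq_dist_add_one_of_adj x hga with h | h
  · left
    refine ⟨x', ha, ?_, hd, h⟩
    rcases hT.1.dist_eq_dist_add_one_of_adj x' hga with h' | h'
    · omega
    · exfalso
      have f := tr_4 hT.1 (g • x) x (g • x') x'
      have c1 := tr_comm (T := T) (g • x) x
      have c2 := tr_comm (T := T) (g • x') x
      have c3 := tr_comm (T := T) (g • x') x'
      have c4 := tr_comm (T := T) (g • x) x'
      have e1 : x' = g • x := tr_eq hT.1 (by omega)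
      have e2 : x = g • x' := tr_eq hT.1 (by omega)
      exact hT.2.2 g _ _ ha ⟨e1.symm, e2.symm⟩
  · right
    have i1 := ac_dist hT g x' (g • x)
    have i2 := ac_dist hT g x (g • x)
    have := tr_concat hT.1 (x := x) (y := g • x) (z := g • x') (w := g • g • x)
      (by unfold OnSeg; omega) (by unfold OnSeg; omega)
      (by intro h; rw [h] at a2; simp at a2)
    omega

theorem ac_pow {T : SimpleGraph V} (hT : IsTreeAction T G) (g : G) (x : V) (hx : x ≠ g • x)
    (h2 : T.dist x (g • g • x) = 2 * T.dist x (g • x)) (n : ℕ) :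
    T.dist x (g ^ n • x) = n * T.dist x (g • x) ∧
    T.dist x (g ^ (n + 1) • x) = (n + 1) * T.dist x (g • x) := by
  induction n with
  | zero => simp
  | succ n ih =>
    refine ⟨by exact_mod_cast ih.2, ?_⟩
    have i1 : T.dist (g ^ n • x) (g ^ (n + 1) • x) = T.dist x (g • x) := by
      rw [pow_succ, mul_smul, ac_dist hT]
    have i2 : T.dist (g ^ (n + 1) • x) (g ^ (n + 2) • x) = T.dist x (g • x) := by
      rw [pow_succ g (n+1), mul_smul, ac_dist hT]
    have i3 : T.dist (g ^ n • x) (g ^ (n + 2) • x) = 2 * T.dist x (g • x) := by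
      rw [pow_add, pow_two, mul_smul, ac_dist hT, mul_smul, h2]
    have := tr_concat hT.1 (x := x) (y := g ^ n • x) (z := g ^ (n + 1) • x)
      (w := g ^ (n + 2) • x)
      (by unfold OnSeg; rw [i1, ih.1, ih.2]; ring) (by unfold OnSeg; rw [i1, i2, i3]; ring)
      (by rw [pow_succ, mul_smul]; exact fun h => hx (smul_left_cancel _ h))
    rw [this, i1, i2, ih.1]
    push_cast; ring

theorem ac_disp {T : SimpleGraph V} (hT : IsTreeAction T G) (g : G) (z : V) (n : ℕ) :
    T.dist z (g ^ n • z) ≤ n * T.dist z (g • z) := by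
  induction n with
  | zero => simp
  | succ n ih =>
    have := tr_tri hT.1 z (g ^ n • z) (g ^ (n + 1) • z)
    rw [pow_succ, mul_smul, ac_dist hT, ← mul_smul, ← pow_succ] at this
    rw [add_mul]; omega

theorem ac_axis_of {T : SimpleGraph V} (hT : IsTreeAction T G) (g : G) (x : V) (hx : x ≠ g • x)
    (h2 : T.dist x (g • g • x) = 2 * T.dist x (g • x)) : x ∈ Axis T g := by
  obtain ⟨z, hz⟩ := ac_exists hT g
  have hz' : T.dist z (g • z) = transLen T g := hz
  apply ac_axis
  rw [← hz']
  by_contra hlt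
  push Not at hlt
  set n := 2 * T.dist x z + 1 with hn
  have h1 := (ac_pow hT g x hx h2 n).1
  have h3 := ac_disp hT g z n
  have t1 := tr_tri hT.1 x z (g ^ n • x)
  have t2 := tr_tri hT.1 z (g ^ n • z) (g ^ n • x)
  rw [ac_dist hT] at t2
  have c := tr_comm (T := T) z x
  have : n * (T.dist z (g • z) + 1) ≤ n * T.dist x (g • x) := Nat.mul_le_mul_left _ hlt
  rw [mul_add] at this
  omega

theorem ac_step {T : SimpleGraph V} (hT : IsTreeAction T G) (g : G) (x : V) (hx : x ∉ Axis T g) :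
    ∃ x', T.Adj x x' ∧ T.dist x (g • x) = T.dist x' (g • x') + 2 ∧
      T.dist x (g • x) = T.dist x' (g • x) + 1 ∧ T.dist x (g • x) = T.dist x (g • x') + 1 := by
  have hne : x ≠ g • x := by
    intro h
    apply hx
    apply ac_axis
    rw [← h]; simp
  rcases ac_dich hT g x hne with h | h
  · exact h
  · exact absurd (ac_axis_of hT g x hne h) hx

theorem ac_two {T : SimpleGraph V} (hT : IsTreeAction T G) (g : G) (x : V) (hx : x ∈ Axis T g)
    (hne : x ≠ g • x) : T.dist x (g • g • x) = 2 * T.dist x (g • x) := by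
  rcases ac_dich hT g x hne with ⟨x', h1, h2, _⟩ | h
  · have := ac_min (T := T) g x'
    have hx' : T.dist x (g • x) = transLen T g := hx
    omega
  · exact h

theorem ac_proj {T : SimpleGraph V} (hT : IsTreeAction T G) (g : G) : ∀ n : ℕ, ∀ x,
    T.dist x (g • x) = n →
    ∃ p, p ∈ Axis T g ∧ T.dist x (g • x) = 2 * T.dist x p + T.dist p (g • p) := by
  intro n
  induction n using Nat.strong_induction_on with
  | _ n ih =>
  intro x hn
  by_cases hx : x ∈ Axis T g
  · exact ⟨x, hx, by simp⟩
  obtain ⟨x', h1, h2, _⟩ := ac_step hT g x hx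
  obtain ⟨p, hp, hd⟩ := ih _ (by omega) x' rfl
  refine ⟨p, hp, ?_⟩
  have a1 : T.dist x x' = 1 := SimpleGraph.dist_eq_one_iff_adj.2 h1
  have t1 := tr_tri hT.1 x x' p
  have t2 := tr_tri hT.1 x p (g • x)
  have t3 := tr_tri hT.1 p (g • p) (g • x)
  rw [ac_dist hT] at t3
  have c := tr_comm (T := T) p x
  omega

theorem ac_coord {T : SimpleGraph V} (hT : IsTreeAction T G) (g : G) (he : ¬ Elliptic T g) :
    0 < transLen T g ∧ ∃ φ : V → ℤ, (∀ p, φ (g • p) = φ p + transLen T g) ∧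
      ∀ p ∈ Axis T g, ∀ q ∈ Axis T g, (T.dist p q : ℤ) = |φ p - φ q| := by
  obtain ⟨x, hx⟩ := ac_exists hT g
  have hx' : T.dist x (g • x) = transLen T g := hx
  have hne : x ≠ g • x := fun h => he ⟨x, h.symm⟩
  have hL : 0 < transLen T g := by
    rw [← hx']
    exact Nat.pos_of_ne_zero fun h => hne (tr_eq hT.1 h)
  refine ⟨hL, ?_⟩
  set L := transLen T g with hLd
  have hpow := fun n => (ac_pow hT g x hne (ac_two hT g x hx hne) n).1
  rw [hx'] at hpow
  set a : ℕ → V := fun n => (g ^ n)⁻¹ • x with ha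
  have ha0 : ∀ n, T.dist (a n) x = n * L := by
    intro n
    rw [← hpow n, ← ac_dist hT (g ^ n)]
    simp [a]
  have ga : ∀ n, g • a (n + 1) = a n := by
    intro n
    simp only [a, ← mul_smul]
    congr 1
    rw [pow_succ]; group
  have ha1 : ∀ n, T.dist (a (n + 1)) (a n) = L := by
    intro n
    rw [← ac_dist hT (g ^ (n + 1)), ← hx']
    congr 1
    · simp [a]
    · simp only [a, ← mul_smul]
      congr 1
      rw [pow_succ']; group
  have stab : ∀ p n, T.dist x p + 1 ≤ n → T.dist (a (n + 1)) p = T.dist (a n) p + L := by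
    intro p n hn
    have f := tr_4 hT.1 (a (n + 1)) x (a n) p
    have t := tr_tri hT.1 (a (n + 1)) (a n) p
    rw [ha0, ha1, ha0] at f
    rw [ha1] at t
    have : n * 1 ≤ n * L := Nat.mul_le_mul_left _ hL
    rw [add_mul] at f
    omega
  have stab2 : ∀ p n, (T.dist (a (T.dist x p + 1 + n)) p : ℤ) =
      T.dist (a (T.dist x p + 1)) p + n * L := by
    intro p n
    induction n with
    | zero => simp
    | succ n ih =>
      rw [← add_assoc, stab p _ (by omega)]
      push_cast
      rw [ih]; ring
  set φ : V → ℤ := fun p => T.dist (a (T.dist x p + 1)) p - (T.dist x p + 1) * L with hφ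
  have hφn : ∀ p n, T.dist x p + 1 ≤ n → (T.dist (a n) p : ℤ) = φ p + n * L := by
    intro p n hn
    obtain ⟨k, rfl⟩ := Nat.exists_eq_add_of_le hn
    rw [stab2]
    simp only [φ]
    push_cast; ring
  have hg : ∀ p, φ (g • p) = φ p + L := by
    intro p
    set n := T.dist x p + 1 + (T.dist x (g • p) + 1)
    have h1 := hφn p (n + 1) (by omega)
    have h2 := hφn (g • p) n (by omega)
    rw [← ga n, ac_dist hT] at h2
    push_cast at *
    linarith
  refine ⟨φ, hg, ?_⟩
  have key : ∀ p ∈ Axis T g, ∀ q ∈ Axis T g, φ p ≤ φ q → (T.dist p q : ℤ) ≤ φ q - φ p := by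
    intro p hp q hq hpq
    have hp' : T.dist p (g • p) = L := hp
    have hq' : T.dist q (g • q) = L := hq
    set n := T.dist x p + 1 + (T.dist x q + 1) + (T.dist x (g • p) + 1)
      + (T.dist x (g • q) + 1)
    have h1 := hφn p n (by omega)
    have h2 := hφn q n (by omega)
    have h3 := hφn (g • p) n (by omega)
    have h4 := hφn (g • q) n (by omega)
    rw [hg] at h3 h4
    have f1 := tr_4 hT.1 (a n) (g • p) p q
    have f2 := tr_4 hT.1 (a n) (g • q) q (g • p)
    have i := ac_dist hT g p q
    have c1 := tr_comm (T := T) (g • p) q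
    have c2 := tr_comm (T := T) (g • p) (g • q)
    have c3 := tr_comm (T := T) p q
    zify at *
    omega
  intro p hp q hq
  have low : ∀ p q, φ q - φ p ≤ T.dist p q := by
    intro p q
    set n := T.dist x p + 1 + (T.dist x q + 1)
    have h1 := hφn p n (by omega)
    have h2 := hφn q n (by omega)
    have := tr_tri hT.1 (a n) p q
    zify at this
    omega
  have l1 := low p q
  have l2 := low q p
  have c3 := tr_comm (T := T) p q
  rcases le_total (φ p) (φ q) with h | h
  · have := key p hp q hq h
    rw [abs_of_nonpos (by linarith)]
    omega
  · have := key q hq p hp h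
    rw [abs_of_nonneg (by linarith)]
    omega

end ActHelpers

section CountHelpers

variable {G : Type*} [Group G] [MulAction G V]

theorem ct_iff (T : SimpleGraph V) (γ : V × V) (u w : V) (n : ℕ) :
    SegCopies T G γ u w n ↔ ∃ p q : ℕ → V,
    (∀ i < n, (∃ s : G, s • γ.1 = p i ∧ s • γ.2 = q i) ∧
      OnSeg T u (p i) (q i) ∧ OnSeg T u (q i) w) ∧
    (∀ i j, i < j → j < n → OnSeg T u (q i) (p j)) := by
  constructor
  · rintro ⟨p, q, h1, h2⟩
    refine ⟨fun i => if h : i < n then p ⟨i, h⟩ else u,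
      fun i => if h : i < n then q ⟨i, h⟩ else u, ?_, ?_⟩
    · intro i hi
      simpa [hi] using h1 ⟨i, hi⟩
    · intro i j hij hj
      have hi : i < n := hij.trans hj
      simpa [hi, hj] using h2 ⟨i, hi⟩ ⟨j, hj⟩ hij
  · rintro ⟨p, q, h1, h2⟩
    exact ⟨fun i => p i, fun i => q i, fun i => h1 i i.2, fun i j hij => h2 i j hij j.2⟩

theorem ct_zero (T : SimpleGraph V) (γ : V × V) (u w : V) : SegCopies T G γ u w 0 :=
  ⟨fun _ => u, fun _ => u, fun i => i.elim0, fun i => i.elim0⟩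

theorem ct_bdd {T : SimpleGraph V} (hT : IsTreeAction T G) {γ : V × V} (hγ : γ.1 ≠ γ.2)
    {u w : V} {n : ℕ} (h : SegCopies T G γ u w n) : n ≤ T.dist u w := by
  obtain ⟨p, q, h1, h2⟩ := (ct_iff T γ u w n).1 h
  have key : ∀ i, i < n → i + 1 ≤ T.dist u (q i) := by
    intro i
    induction i with
    | zero =>
      intro hi
      obtain ⟨⟨s, hs1, hs2⟩, h3, h4⟩ := h1 0 hi
      have : T.dist (p 0) (q 0) ≠ 0 := by
        rw [← hs1, ← hs2, ac_dist hT]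
        exact fun h => hγ (tr_eq hT.1 h)
      unfold OnSeg at *; omega
    | succ i ih =>
      intro hi
      have := ih (by omega)
      obtain ⟨⟨s, hs1, hs2⟩, h3, h4⟩ := h1 (i + 1) hi
      have h5 := h2 i (i + 1) (by omega) hi
      have : T.dist (p (i + 1)) (q (i + 1)) ≠ 0 := by
        rw [← hs1, ← hs2, ac_dist hT]
        exact fun h => hγ (tr_eq hT.1 h)
      unfold OnSeg at *; omega
  rcases n with _ | n
  · simp
  · have := key n (by omega)
    have h4 := (h1 n (by omega)).2.2
    unfold OnSeg at *; omega

theorem ct_le {T : SimpleGraph V} (hT : IsTreeAction T G) {γ : V × V} (hγ : γ.1 ≠ γ.2)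
    {u w : V} {n : ℕ} (h : SegCopies T G γ u w n) : n ≤ cSeg T G γ u w :=
  le_csSup ⟨T.dist u w, fun _ hm => ct_bdd hT hγ hm⟩ h

theorem ct_mem {T : SimpleGraph V} (hT : IsTreeAction T G) {γ : V × V} (hγ : γ.1 ≠ γ.2)
    (u w : V) : SegCopies T G γ u w (cSeg T G γ u w) :=
  Nat.sSup_mem (s := {n : ℕ | SegCopies T G γ u w n}) ⟨0, ct_zero T γ u w⟩
    ⟨T.dist u w, fun _ hm => ct_bdd hT hγ hm⟩

theorem ct_smul_le {T : SimpleGraph V} (hT : IsTreeAction T G) {γ : V × V} (hγ : γ.1 ≠ γ.2)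
    (g : G) (u w : V) : cSeg T G γ u w ≤ cSeg T G γ (g • u) (g • w) := by
  apply ct_le hT hγ
  obtain ⟨p, q, h1, h2⟩ := ct_mem hT hγ u w
  refine ⟨fun i => g • p i, fun i => g • q i, fun i => ?_, fun i j hij => ?_⟩
  · obtain ⟨⟨s, hs1, hs2⟩, h3, h4⟩ := h1 i
    refine ⟨⟨g * s, by rw [mul_smul, hs1], by rw [mul_smul, hs2]⟩, ?_, ?_⟩
    · unfold OnSeg at *; simpa only [ac_dist hT] using h3
    · unfold OnSeg at *; simpa only [ac_dist hT] using h4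
  · have := h2 i j hij
    unfold OnSeg at *; simpa only [ac_dist hT] using this

theorem ct_smul {T : SimpleGraph V} (hT : IsTreeAction T G) {γ : V × V} (hγ : γ.1 ≠ γ.2)
    (g : G) (u w : V) : cSeg T G γ (g • u) (g • w) = cSeg T G γ u w := by
  apply le_antisymm _ (ct_smul_le hT hγ g u w)
  simpa using ct_smul_le hT hγ g⁻¹ (g • u) (g • w)

theorem ct_rev_le {T : SimpleGraph V} (hT : IsTreeAction T G) {γ : V × V} (hγ : γ.1 ≠ γ.2)
    (u w : V) : cSeg T G γ u w ≤ cSeg T G (γ.2, γ.1) w u := by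
  apply ct_le hT (γ := (γ.2, γ.1)) (Ne.symm hγ)
  obtain ⟨p, q, h1, h2⟩ := ct_mem hT hγ u w
  refine ⟨fun i => q i.rev, fun i => p i.rev, fun i => ?_, fun i j hij => ?_⟩
  · obtain ⟨⟨s, hs1, hs2⟩, h3, h4⟩ := h1 i.rev
    refine ⟨⟨s, hs2, hs1⟩, ?_, ?_⟩
    all_goals
      unfold OnSeg at *
      dsimp only
      have t1 := tr_tri hT.1 u (p i.rev) w
      have t2 := tr_tri hT.1 (p i.rev) (q i.rev) w
      have c1 := tr_comm (T := T) w (p i.rev)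
      have c2 := tr_comm (T := T) w (q i.rev)
      have c3 := tr_comm (T := T) u (p i.rev)
      have c4 := tr_comm (T := T) (p i.rev) (q i.rev)
      have c5 := tr_comm (T := T) u w
      omega
  · have h5 := h2 _ _ (Fin.rev_lt_rev.2 hij)
    obtain ⟨-, h3, h4⟩ := h1 i.rev
    unfold OnSeg at *
    dsimp only
    have t1 := tr_tri hT.1 u (p i.rev) w
    have t2 := tr_tri hT.1 u (q j.rev) w
    have t3 := tr_tri hT.1 (q j.rev) (p i.rev) w
    have t2 := tr_tri hT.1 (p i.rev) (q i.rev) w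
    have c1 := tr_comm (T := T) w (p i.rev)
    have c2 := tr_comm (T := T) w (q j.rev)
    have c4 := tr_comm (T := T) (p i.rev) (q j.rev)
    omega

theorem ct_rev {T : SimpleGraph V} (hT : IsTreeAction T G) {γ : V × V} (hγ : γ.1 ≠ γ.2)
    (u w : V) : cSeg T G (γ.2, γ.1) w u = cSeg T G γ u w :=
  le_antisymm (ct_rev_le hT (γ := (γ.2, γ.1)) (Ne.symm hγ) w u) (ct_rev_le hT hγ u w)

theorem ct_add {T : SimpleGraph V} (hT : IsTreeAction T G) {γ : V × V} (hγ : γ.1 ≠ γ.2)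
    {u w v : V} (hw : OnSeg T u w v) :
    cSeg T G γ u w + cSeg T G γ w v ≤ cSeg T G γ u v := by
  apply ct_le hT hγ
  set m := cSeg T G γ u w
  set n := cSeg T G γ w v
  obtain ⟨p, q, h1, h2⟩ := (ct_iff ..).1 (ct_mem hT hγ u w)
  obtain ⟨p', q', h1', h2'⟩ := (ct_iff ..).1 (ct_mem hT hγ w v)
  rw [ct_iff]
  have A : ∀ i < m, OnSeg T u (q i) w := fun i hi => (h1 i hi).2.2
  have B : ∀ i < n, OnSeg T u w (p' i) ∧ OnSeg T u (p' i) (q' i) ∧ OnSeg T u (q' i) v := by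
    intro i hi
    obtain ⟨-, h3, h4⟩ := h1' i hi
    unfold OnSeg at *
    have t1 := tr_tri hT.1 u w (p' i)
    have t2 := tr_tri hT.1 u (p' i) (q' i)
    have t3 := tr_tri hT.1 u (q' i) v
    omega
  refine ⟨fun i => if i < m then p i else p' (i - m),
    fun i => if i < m then q i else q' (i - m), fun i hi => ?_, fun i j hij hj => ?_⟩
  · by_cases him : i < m
    · simp only [him, if_true]
      obtain ⟨h, h3, h4⟩ := h1 i him
      refine ⟨h, h3, ?_⟩
      unfold OnSeg at *
      have t1 := tr_tri hT.1 (q i) w v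
      have t2 := tr_tri hT.1 u (q i) v
      omega
    · simp only [him, if_false]
      exact ⟨(h1' (i - m) (by omega)).1, (B (i - m) (by omega)).2⟩
  · by_cases hjm : j < m
    · have him : i < m := by omega
      simp only [him, hjm, if_true]
      exact h2 i j hij hjm
    · by_cases him : i < m
      · simp only [him, hjm, if_true, if_false]
        have a := A i him
        obtain ⟨b, -⟩ := B (j - m) (by omega)
        unfold OnSeg at *
        have t1 := tr_tri hT.1 (q i) w (p' (j - m))
        have t2 := tr_tri hT.1 u (q i) (p' (j - m))
        omega
      · simp only [him, hjm, if_false]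
        have a := h2' (i - m) (j - m) (by omega) (by omega)
        obtain ⟨b1, b2, b3⟩ := B (i - m) (by omega)
        obtain ⟨d1, -, -⟩ := B (j - m) (by omega)
        obtain ⟨-, e1, -⟩ := h1' (i - m) (by omega)
        unfold OnSeg at *
        omega

theorem ct_split {T : SimpleGraph V} (hT : IsTreeAction T G) {γ : V × V} (hγ : γ.1 ≠ γ.2)
    {u w v : V} (hw : OnSeg T u w v) :
    cSeg T G γ u v ≤ cSeg T G γ u w + cSeg T G γ w v + 1 := by
  obtain ⟨p, q, h1, h2⟩ := (ct_iff ..).1 (ct_mem hT hγ u v)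
  set n := cSeg T G γ u v
  have P : ∀ i < n, OnSeg T u (p i) v := by
    intro i hi
    obtain ⟨-, h3, h4⟩ := h1 i hi
    unfold OnSeg at *
    have t1 := tr_tri hT.1 u (p i) v
    have t2 := tr_tri hT.1 (p i) (q i) v
    omega
  have ex : ∃ i, n ≤ i ∨ T.dist u w < T.dist u (q i) := ⟨n, Or.inl le_rfl⟩
  classical
  obtain ⟨a, ha, hmin⟩ : ∃ a, (n ≤ a ∨ T.dist u w < T.dist u (q a)) ∧
      ∀ i < a, i < n ∧ T.dist u (q i) ≤ T.dist u w := by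
    refine ⟨Nat.find ex, Nat.find_spec ex, fun i hi => ?_⟩
    have := Nat.find_min ex hi
    push Not at this
    exact this
  have S1 : SegCopies T G γ u w a := by
    rw [ct_iff]
    refine ⟨p, q, fun i hi => ?_, fun i j hij hj => h2 i j hij (hmin j hj).1⟩
    obtain ⟨hin, hle⟩ := hmin i hi
    obtain ⟨h, h3, h4⟩ := h1 i hin
    refine ⟨h, h3, ?_⟩
    have := tr_coord hT.1 h4 hw
    unfold OnSeg at *; omega
  have L1 := ct_le hT hγ S1
  by_cases han : n ≤ a
  · omega
  have S2 : SegCopies T G γ w v (n - a - 1) := by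
    rw [ct_iff]
    have hlt : T.dist u w < T.dist u (q a) := by omega
    have Q : ∀ i < n - a - 1, T.dist u w ≤ T.dist u (p (a + 1 + i)) := by
      intro i hi
      have := h2 a (a + 1 + i) (by omega) (by omega)
      unfold OnSeg at *; omega
    refine ⟨fun i => p (a + 1 + i), fun i => q (a + 1 + i), fun i hi => ?_,
      fun i j hij hj => ?_⟩
    · obtain ⟨h, h3, h4⟩ := h1 (a + 1 + i) (by omega)
      refine ⟨h, ?_⟩
      have := Q i hi
      have e1 := tr_coord hT.1 hw h4
      have e2 := tr_coord hT.1 hw (P (a + 1 + i) (by omega))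
      unfold OnSeg at *
      dsimp only
      omega
    · have h5 := h2 (a + 1 + i) (a + 1 + j) (by omega) (by omega)
      have q1 := Q i (by omega)
      obtain ⟨h, h3, h4⟩ := h1 (a + 1 + i) (by omega)
      have e1 := tr_coord hT.1 hw h4
      have e2 := tr_coord hT.1 hw (P (a + 1 + j) (by omega))
      unfold OnSeg at *
      dsimp only
      omega
  have L2 := ct_le hT hγ S2
  omega

theorem ax_smul {T : SimpleGraph V} (hT : IsTreeAction T G) {g : G} {y : V}
    (hy : y ∈ Axis T g) (k : ℤ) : g ^ k • y ∈ Axis T g := by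
  have hy' : T.dist y (g • y) = transLen T g := hy
  have : T.dist (g ^ k • y) (g • g ^ k • y) = transLen T g := by
    rw [← mul_smul, (Commute.self_zpow g k).eq, mul_smul, ac_dist hT, hy']
  exact this

theorem ct_shift {T : SimpleGraph V} (hT : IsTreeAction T G) {γ : V × V} (hγ : γ.1 ≠ γ.2)
    {g : G} (he : ¬ Elliptic T g) {x y : V} (hx : x ∈ Axis T g) (hy : y ∈ Axis T g) :
    cSeg T G γ y (g • y) ≤ cSeg T G γ x (g • x) + 1 := by
  obtain ⟨hL, φ, hφ1, hφ2⟩ := ac_coord hT g he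
  have hz : ∀ (k : ℕ) p, φ (g ^ k • p) = φ p + k * transLen T g := by
    intro k p
    induction k with
    | zero => simp
    | succ k ih => rw [pow_succ', mul_smul, hφ1, ih]; push_cast; ring
  have hz' : ∀ (k : ℤ) p, φ (g ^ k • p) = φ p + k * transLen T g := by
    intro k p
    obtain ⟨m, rfl | rfl⟩ := k.eq_nat_or_neg
    · rw [zpow_natCast]; exact_mod_cast hz m p
    · have := hz m (g ^ (-(m : ℤ)) • p)
      rw [zpow_neg, zpow_natCast, smul_inv_smul] at this
      rw [zpow_neg, zpow_natCast, this]; ring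
  set L : ℤ := ((transLen T g : ℕ) : ℤ) with hLd
  have hL' : 0 < L := by rw [hLd]; exact_mod_cast hL
  set k : ℤ := -((φ y - φ x) / L) with hk
  set y' := g ^ k • y with hy'd
  have hy' : y' ∈ Axis T g := ax_smul hT hy k
  have e : cSeg T G γ y (g • y) = cSeg T G γ y' (g • y') := by
    rw [hy'd, ← mul_smul, (Commute.self_zpow g k).eq, mul_smul, ct_smul hT hγ]
  have b : φ y' - φ x = (φ y - φ x) % L := by
    rw [hy'd, hz', hk, Int.emod_def]; ring
  have b1 := Int.emod_nonneg (φ y - φ x) hL'.ne'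
  have b2 := Int.emod_lt_of_pos (φ y - φ x) hL'
  have hgx : g • x ∈ Axis T g := by simpa using ax_smul hT hx 1
  have hgy : g • y' ∈ Axis T g := by simpa using ax_smul hT hy' 1
  have o1 : OnSeg T y' (g • x) (g • y') := by
    unfold OnSeg
    zify
    rw [hφ2 _ hy' _ hgx, hφ2 _ hgx _ hgy, hφ2 _ hy' _ hgy, hφ1, hφ1]
    rw [abs_of_nonpos (by linarith), abs_of_nonpos (by linarith), abs_of_nonpos (by linarith)]
    ring
  have o2 : OnSeg T x y' (g • x) := by
    unfold OnSeg
    zify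
    rw [hφ2 _ hy' _ hgx, hφ2 _ hx _ hgx, hφ2 _ hx _ hy', hφ1]
    rw [abs_of_nonpos (by linarith), abs_of_nonpos (by linarith), abs_of_nonpos (by linarith)]
    ring
  have s1 := ct_split hT hγ o1
  have s2 := ct_add hT hγ o2
  rw [ct_smul hT hγ] at s1
  omega

theorem cc_up {T : SimpleGraph V} (hT : IsTreeAction T G) {γ : V × V} (hγ : γ.1 ≠ γ.2)
    {g : G} (he : ¬ Elliptic T g) {x : V} (hx : x ∈ Axis T g) {n : ℕ} (h : CircCopies T g γ n) :
    n ≤ cSeg T G γ x (g • x) + 1 := by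
  rcases n with _ | n
  · omega
  obtain ⟨hL, φ, hφ1, hφ2⟩ := ac_coord hT g he
  obtain ⟨p, q, h1, h2, h3⟩ := h
  have ah : ∀ a ∈ Axis T g, ∀ b ∈ Axis T g, Ahead T g a b → φ a ≤ φ b := by
    intro a ha b hb hab
    unfold Ahead at hab
    have hgb : g • b ∈ Axis T g := by simpa using ax_smul hT hb 1
    zify at hab
    rw [hφ2 _ ha _ hgb, hφ2 _ ha _ hb, hφ1] at hab
    rcases abs_cases (φ a - (φ b + transLen T g)) with h | h <;>
    rcases abs_cases (φ a - φ b) with h' | h' <;> omega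
  have p0 := (h1 0).1
  have gp0 : g • p 0 ∈ Axis T g := by simpa using ax_smul hT p0 1
  have ge0 : ∀ i, φ (p 0) ≤ φ (p i) := by
    intro i
    by_cases hi : i = 0
    · rw [hi]
    · have a := ah _ (h1 0).2.1 _ (h1 i).1 (h2 0 i (Fin.pos_of_ne_zero hi))
      have b := ah _ (h1 0).1 _ (h1 0).2.1 (h1 0).2.2.2
      omega
  have mk : ∀ a ∈ Axis T g, ∀ b ∈ Axis T g, φ (p 0) ≤ φ a → φ a ≤ φ b → OnSeg T (p 0) a b := by
    intro a ha b hb hab hbc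
    unfold OnSeg
    zify
    rw [hφ2 _ p0 _ ha, hφ2 _ ha _ hb, hφ2 _ p0 _ hb]
    rw [abs_of_nonpos (by linarith), abs_of_nonpos (by linarith), abs_of_nonpos (by linarith)]
    ring
  have S : SegCopies T G γ (p 0) (g • p 0) (n + 1) := by
    refine ⟨p, q, fun i => ?_, fun i j hij => ?_⟩
    · obtain ⟨a1, a2, a3, a4⟩ := h1 i
      have a5 := ah _ a1 _ a2 a4
      have a6 := ge0 i
      have a7 := ah _ a2 _ gp0 (h3 i 0)
      exact ⟨a3, mk _ a1 _ a2 a6 a5, mk _ a2 _ gp0 (by omega) a7⟩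
    · obtain ⟨a1, a2, a3, a4⟩ := h1 i
      have a5 := ah _ a1 _ a2 a4
      have a6 := ge0 i
      exact mk _ a2 _ (h1 j).1 (by omega) (ah _ a2 _ (h1 j).1 (h2 i j hij))
  exact (ct_le hT hγ S).trans (ct_shift hT hγ he hx p0)

theorem cc_low {T : SimpleGraph V} (hT : IsTreeAction T G) {γ : V × V} (hγ : γ.1 ≠ γ.2)
    {g : G} (he : ¬ Elliptic T g) {x : V} (hx : x ∈ Axis T g) :
    CircCopies T g γ (cSeg T G γ x (g • x)) := by
  obtain ⟨hL, φ, hφ1, hφ2⟩ := ac_coord hT g he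
  obtain ⟨p, q, h1, h2⟩ := ct_mem hT hγ x (g • x)
  have hgx : g • x ∈ Axis T g := by simpa using ax_smul hT hx 1
  have on : ∀ z, OnSeg T x z (g • x) → z ∈ Axis T g ∧ φ z = φ x + T.dist x z := by
    intro z hz
    have hx' : T.dist x (g • x) = transLen T g := hx
    have hzA : z ∈ Axis T g := by
      apply ac_axis
      have := tr_tri hT.1 z (g • x) (g • z)
      rw [ac_dist hT] at this
      unfold OnSeg at hz
      omega
    refine ⟨hzA, ?_⟩
    unfold OnSeg at hz
    have e1 := hφ2 _ hx _ hzA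
    have e2 := hφ2 _ hzA _ hgx
    rw [hφ1] at e2
    rcases abs_cases (φ x - φ z) with h | h <;>
    rcases abs_cases (φ z - (φ x + transLen T g)) with h' | h' <;> omega
  have ah : ∀ a ∈ Axis T g, ∀ b ∈ Axis T g, φ a ≤ φ b → Ahead T g a b := by
    intro a ha b hb hab
    unfold Ahead
    have hgb : g • b ∈ Axis T g := by simpa using ax_smul hT hb 1
    zify
    rw [hφ2 _ ha _ hgb, hφ2 _ ha _ hb, hφ1]
    rw [abs_of_nonpos (by linarith), abs_of_nonpos (by linarith)]
    ring
  have hp : ∀ i, OnSeg T x (p i) (g • x) := by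
    intro i
    obtain ⟨-, h3, h4⟩ := h1 i
    unfold OnSeg at *
    have t1 := tr_tri hT.1 x (p i) (g • x)
    have t2 := tr_tri hT.1 (p i) (q i) (g • x)
    omega
  have hx' : T.dist x (g • x) = transLen T g := hx
  refine ⟨p, q, fun i => ?_, fun i j hij => ?_, fun i j => ?_⟩
  · obtain ⟨h, h3, h4⟩ := h1 i
    obtain ⟨a1, a2⟩ := on _ (hp i)
    obtain ⟨b1, b2⟩ := on _ h4
    unfold OnSeg at h3
    exact ⟨a1, b1, h, ah _ a1 _ b1 (by omega)⟩
  · obtain ⟨h, h3, h4⟩ := h1 i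
    have h5 := h2 i j hij
    obtain ⟨a1, a2⟩ := on _ (hp j)
    obtain ⟨b1, b2⟩ := on _ h4
    unfold OnSeg at h5
    exact ah _ b1 _ a1 (by omega)
  · obtain ⟨h, h3, h4⟩ := h1 i
    obtain ⟨a1, a2⟩ := on _ (hp j)
    obtain ⟨b1, b2⟩ := on _ h4
    have hgp : g • p j ∈ Axis T g := by simpa using ax_smul hT a1 1
    refine ah _ b1 _ hgp ?_
    rw [hφ1]
    unfold OnSeg at h4
    omega

theorem cc_bounds {T : SimpleGraph V} (hT : IsTreeAction T G) {γ : V × V} (hγ : γ.1 ≠ γ.2)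
    {g : G} (he : ¬ Elliptic T g) {x : V} (hx : x ∈ Axis T g) :
    cSeg T G γ x (g • x) ≤ cCirc T g γ ∧ cCirc T g γ ≤ cSeg T G γ x (g • x) + 1 :=
  ⟨le_csSup ⟨_, fun _ hm => cc_up hT hγ he hx hm⟩ (cc_low hT hγ he hx),
    csSup_le ⟨_, cc_low hT hγ he hx⟩ fun _ hm => cc_up hT hγ he hx hm⟩

/-- The segment version of the counting function. -/
noncomputable def FSeg (T : SimpleGraph V) (G : Type*) [Group G] [MulAction G V]
    (γ : V × V) (u w : V) : ℝ := (cSeg T G γ u w : ℝ) - cSeg T G γ w u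

theorem F_anti (T : SimpleGraph V) (γ : V × V) (u w : V) :
    FSeg T G γ w u = - FSeg T G γ u w := by unfold FSeg; ring

theorem F_smul {T : SimpleGraph V} (hT : IsTreeAction T G) {γ : V × V} (hγ : γ.1 ≠ γ.2)
    (g : G) (u w : V) : FSeg T G γ (g • u) (g • w) = FSeg T G γ u w := by
  unfold FSeg; rw [ct_smul hT hγ, ct_smul hT hγ]

theorem F_split {T : SimpleGraph V} (hT : IsTreeAction T G) {γ : V × V} (hγ : γ.1 ≠ γ.2)
    {u w v : V} (hw : OnSeg T u w v) :
    |FSeg T G γ u v - FSeg T G γ u w - FSeg T G γ w v| ≤ 1 := by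
  have hw' : OnSeg T v w u := by
    unfold OnSeg at *
    rw [tr_comm v w, tr_comm w u, tr_comm v u, ← hw, add_comm]
  have a1 := ct_add hT hγ hw
  have a2 := ct_split hT hγ hw
  have a3 := ct_add hT hγ hw'
  have a4 := ct_split hT hγ hw'
  unfold FSeg
  rify at a1 a2 a3 a4
  rw [abs_le]
  constructor <;> linarith

theorem f_axis {T : SimpleGraph V} (hT : IsTreeAction T G) {γ : V × V} (hγ : γ.1 ≠ γ.2)
    (g : G) {z : V} (hz : z ∈ Axis T g) :
    |fCount T G γ g - FSeg T G γ z (g • z)| ≤ 1 := by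
  unfold fCount
  split_ifs with he
  · obtain ⟨v, hv⟩ := he
    have h1 := ac_min (T := T) g v
    have hz' : T.dist z (g • z) = transLen T g := hz
    rw [hv] at h1
    simp at h1
    have : z = g • z := tr_eq hT.1 (by omega)
    rw [← this]
    simp [FSeg]
  · obtain ⟨a1, a2⟩ := cc_bounds hT hγ he hz
    obtain ⟨a3, a4⟩ := cc_bounds hT (γ := (γ.2, γ.1)) (Ne.symm hγ) he hz
    rw [ct_rev hT hγ] at a3 a4
    unfold FSeg
    rify at a1 a2 a3 a4
    rw [abs_le]
    constructor <;> linarith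

end CountHelpers

section MainHelpers

variable {G : Type*} [Group G] [MulAction G V]

/-- Perimeter of the triangle `x, h x, g h x`. -/
noncomputable def SPer (T : SimpleGraph V) (h g : G) (x : V) : ℕ :=
  T.dist x (h • x) + T.dist (h • x) (g • h • x) + T.dist (g • h • x) x

theorem mn_or {T : SimpleGraph V} (hT : IsTreeAction T G) (h g : G) (x : V)
    (hm : ∀ x', SPer T h g x ≤ SPer T h g x') (hx : x ∉ Axis T h) :
    OnSeg T (h • x) x (g • h • x) ∨ OnSeg T x (h • x) (g • h • x) := by
  by_contra hcon
  push Not at hcon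
  obtain ⟨n1, n2⟩ := hcon
  obtain ⟨x', ha, s1, s2, s3⟩ := ac_step hT h x hx
  have hha := hT.2.1 h _ _ ha
  have a1 : T.dist x x' = 1 := SimpleGraph.dist_eq_one_iff_adj.2 ha
  have a2 : T.dist (h • x) (h • x') = 1 := SimpleGraph.dist_eq_one_iff_adj.2 hha
  have a3 := ac_dist hT g (h • x) (h • x')
  have m := hm x'
  unfold SPer at m
  set y1 := h • x
  set y2 := g • y1
  set z1 := h • x'
  set z2 := g • z1
  unfold OnSeg at n1 n2
  have t1 := tr_tri hT.1 y1 x y2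
  have t2 := tr_tri hT.1 x y1 y2
  have f1 := tr_4 hT.1 x y1 x' y2
  have f2 := tr_4 hT.1 y1 x z1 y2
  have d1 := hT.1.dist_eq_dist_add_one_of_adj y2 ha
  have d2 := hT.1.dist_eq_dist_add_one_of_adj y2 hha
  have c1 := tr_comm (T := T) x y1
  have c2 := tr_comm (T := T) x y2
  have c3 := tr_comm (T := T) y1 y2
  have c4 := tr_comm (T := T) x' y2
  have c5 := tr_comm (T := T) z1 y2
  have c6 := tr_comm (T := T) z1 x
  have c7 := tr_comm (T := T) y1 x'
  have u1 := tr_tri hT.1 z1 y2 z2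
  have u2 := tr_tri hT.1 z2 y2 x'
  have c8 := tr_comm (T := T) z2 y2
  have c9 := tr_comm (T := T) z2 x'
  omega

theorem mn_cyc {T : SimpleGraph V} (hT : IsTreeAction T G) {h g k : G} (hk : k * (g * h) = 1)
    (x : V) (hm : ∀ x', SPer T h g x ≤ SPer T h g x') :
    ∀ x', SPer T g k (h • x) ≤ SPer T g k x' := by
  have key : ∀ x, SPer T g k (h • x) = SPer T h g x := by
    intro x
    have : k • g • h • x = x := by rw [← mul_smul g, ← mul_smul, hk, one_smul]
    unfold SPer
    rw [this]; ring
  intro x'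
  have := hm (h⁻¹ • x')
  rw [← key, ← key, smul_inv_smul] at this
  exact this

theorem mn_dumb {T : SimpleGraph V} (hT : IsTreeAction T G) {γ : V × V} (hγ : γ.1 ≠ γ.2)
    {h g k : G} (hk : k * (g * h) = 1)
    (x : V) (hm : ∀ x', SPer T h g x ≤ SPer T h g x') (hx : x ∉ Axis T h)
    (hs : OnSeg T (h • x) x (g • h • x)) {a b c : ℝ}
    (ra : ∀ z ∈ Axis T h, |a - FSeg T G γ z (h • z)| ≤ 1)
    (rb : ∀ z ∈ Axis T g, |b - FSeg T G γ z (g • z)| ≤ 1)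
    (rc : ∀ z ∈ Axis T k, |c - FSeg T G γ z (k • z)| ≤ 1) : |a + b + c| ≤ 6 := by
  have kk : ∀ z : V, k • g • h • z = z := by
    intro z; rw [← mul_smul g, ← mul_smul, hk, one_smul]
  by_cases hg : h • x ∈ Axis T g
  · obtain ⟨p, hp, dp⟩ := ac_proj hT h _ x rfl
    obtain ⟨q, hq, dq⟩ := ac_proj hT k _ (g • h • x) rfl
    rw [kk] at dq
    have hg' : T.dist (h • x) (g • h • x) = transLen T g := hg
    have mg := ac_min (T := T) g (h • p)
    have t1 := tr_tri hT.1 (h • p) p (g • h • p)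
    have t2 := tr_tri hT.1 p (k • q) (g • h • p)
    have t3 := tr_tri hT.1 (k • q) q (g • h • p)
    have t4 := tr_tri hT.1 p x (k • q)
    have t5 := tr_tri hT.1 q (g • h • x) (g • h • p)
    have i1 : T.dist x (k • q) = T.dist (g • h • x) q := by
      rw [← ac_dist hT k (g • h • x) q, kk]
    have i2 : T.dist (g • h • x) (g • h • p) = T.dist x p := by
      rw [ac_dist hT, ac_dist hT]
    have c1 := tr_comm (T := T) p (h • p)
    have c2 := tr_comm (T := T) q (k • q)
    have c3 := tr_comm (T := T) p x
    have c4 := tr_comm (T := T) q (g • h • x)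
    have c5 := tr_comm (T := T) x (h • x)
    have c6 := tr_comm (T := T) x (g • h • x)
    unfold OnSeg at hs
    have hpA : h • p ∈ Axis T g := ac_axis (by omega)
    have e1 := F_split hT hγ (u := h • p) (w := p) (v := g • h • p) (by unfold OnSeg; omega)
    have e2 := F_split hT hγ (u := p) (w := k • q) (v := g • h • p) (by unfold OnSeg; omega)
    have e3 := F_split hT hγ (u := k • q) (w := q) (v := g • h • p) (by unfold OnSeg; omega)
    have e4 : FSeg T G γ q (g • h • p) = FSeg T G γ (k • q) p := by
      rw [← F_smul hT hγ k q, kk]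
    have e5 := F_anti (G := G) T γ (k • q) p
    have e6 := F_anti (G := G) T γ (h • p) p
    have e7 := F_anti (G := G) T γ (k • q) q
    have r1 := ra p hp
    have r2 := rb _ hpA
    have r3 := rc q hq
    rw [abs_le] at *
    constructor <;> linarith
  · exfalso
    have hne : x ≠ h • x := by
      intro hh
      apply hx
      apply ac_axis
      rw [← hh]; simp
    have t0 : T.dist x (h • x) ≠ 0 := fun h0 => hne (tr_eq hT.1 h0)
    have c1 := tr_comm (T := T) x (h • x)
    rcases mn_or hT g k (h • x) (mn_cyc hT hk x hm) hg with o | o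
    · rw [kk] at o
      unfold OnSeg at hs o
      have c2 := tr_comm (T := T) x (g • h • x)
      have c3 := tr_comm (T := T) (h • x) (g • h • x)
      omega
    · rw [kk] at o
      have c2 := tr_comm (T := T) x (g • h • x)
      have e : x = g • h • x := tr_eq hT.1 (by unfold OnSeg at hs o; omega)
      obtain ⟨x', ha, s1, s2, s3⟩ := ac_step hT h x hx
      obtain ⟨z', hb, u1, u2, u3⟩ := ac_step hT g (h • x) hg
      rw [← e] at u1 u2 u3
      have hz : h • x' = z' := tr_uniq hT.1 (v := x) (hT.2.1 h _ _ ha) hb (by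
        have := tr_comm (T := T) x (h • x')
        omega) u2
      have hgb := hT.2.1 g _ _ hb
      rw [← e] at hgb
      have hw : x' = g • z' := tr_uniq hT.1 (v := h • x) ha hgb s2 (by
        have := tr_comm (T := T) (h • x) (g • z')
        omega)
      have m := hm x'
      unfold SPer at m
      rw [hz, ← hw, ← e] at m
      rw [hz] at s1
      simp at m
      have c3 := tr_comm (T := T) x' z'
      omega

theorem r_inv {T : SimpleGraph V} (hT : IsTreeAction T G) {γ : V × V}
    {k k' : G} (hk : k * k' = 1) {c : ℝ}
    (rc : ∀ z ∈ Axis T k, |c - FSeg T G γ z (k • z)| ≤ 1) :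
    ∀ z ∈ Axis T k', |-c - FSeg T G γ z (k' • z)| ≤ 1 := by
  intro z hz
  have hz' : T.dist z (k' • z) = transLen T k' := hz
  have kk : ∀ z : V, k • k' • z = z := by
    intro z; rw [← mul_smul, hk, one_smul]
  have kk' : ∀ z : V, k' • k • z = z := by
    intro z; rw [← mul_smul, mul_eq_one_comm.1 hk, one_smul]
  have : k' • z ∈ Axis T k := by
    obtain ⟨w, hw⟩ := ac_exists hT k
    have hw' : T.dist w (k • w) = transLen T k := hw
    apply ac_axis
    rw [kk, ← hw', tr_comm, hz']
    have := ac_min (T := T) k' (k • w)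
    rw [kk', tr_comm] at this
    exact this
  have r := rc _ this
  rw [kk, F_anti] at r
  rw [abs_le] at *
  constructor <;> linarith

theorem ax_inv {T : SimpleGraph V} (hT : IsTreeAction T G) {k : G} {x : V}
    (hx : k • x ∈ Axis T k⁻¹) : x ∈ Axis T k := by
  have hx' : T.dist (k • x) (k⁻¹ • k • x) = transLen T k⁻¹ := hx
  rw [inv_smul_smul, tr_comm] at hx'
  apply ac_axis
  obtain ⟨w, hw⟩ := ac_exists hT k
  have hw' : T.dist w (k • w) = transLen T k := hw
  have := ac_min (T := T) k⁻¹ (k • w)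
  rw [inv_smul_smul, tr_comm] at this
  omega

theorem mn_side {T : SimpleGraph V} (hT : IsTreeAction T G) {γ : V × V} (hγ : γ.1 ≠ γ.2)
    {h g k : G} (hk : k * (g * h) = 1)
    (x : V) (hm : ∀ x', SPer T h g x ≤ SPer T h g x') (hx : x ∉ Axis T h) {a b c : ℝ}
    (ra : ∀ z ∈ Axis T h, |a - FSeg T G γ z (h • z)| ≤ 1)
    (rb : ∀ z ∈ Axis T g, |b - FSeg T G γ z (g • z)| ≤ 1)
    (rc : ∀ z ∈ Axis T k, |c - FSeg T G γ z (k • z)| ≤ 1) : |a + b + c| ≤ 6 := by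
  rcases mn_or hT h g x hm hx with o | o
  · exact mn_dumb hT hγ hk x hm hx o ra rb rc
  · have key : ∀ x, SPer T h⁻¹ (g * h) (h • x) = SPer T h g x := by
      intro x
      unfold SPer
      rw [inv_smul_smul, mul_smul, tr_comm (h • x) x, tr_comm x (g • h • x),
        tr_comm (h • x) (g • h • x)]
      ring
    have := mn_dumb hT hγ (h := h⁻¹) (g := g * h) (k := g⁻¹) (by group) (h • x)
      (by
        intro x'
        have := hm (h⁻¹ • x')
        rw [← key, ← key, smul_inv_smul] at this
        exact this)
      (fun hh => hx (ax_inv hT hh))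
      (by rw [inv_smul_smul, mul_smul]; exact o)
      (r_inv hT (mul_inv_cancel h) ra) (r_inv hT hk rc) (r_inv hT (mul_inv_cancel g) rb)
    rw [abs_le] at *
    constructor <;> linarith

theorem mn_main {T : SimpleGraph V} (hT : IsTreeAction T G) {γ : V × V} (hγ : γ.1 ≠ γ.2)
    {h g k : G} (hk : k * (g * h) = 1) {a b c : ℝ}
    (ra : ∀ z ∈ Axis T h, |a - FSeg T G γ z (h • z)| ≤ 1)
    (rb : ∀ z ∈ Axis T g, |b - FSeg T G γ z (g • z)| ≤ 1)
    (rc : ∀ z ∈ Axis T k, |c - FSeg T G γ z (k • z)| ≤ 1) : |a + b + c| ≤ 6 := by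
  have kk : ∀ z : V, k • g • h • z = z := by
    intro z; rw [← mul_smul g, ← mul_smul, hk, one_smul]
  have hk2 : h * (k * g) = 1 := by
    rw [mul_eq_one_comm, mul_assoc]; exact hk
  have hk3 : g * (h * k) = 1 := by
    rw [mul_eq_one_comm, mul_assoc]; exact hk2
  obtain ⟨x, hm⟩ : ∃ x, ∀ x', SPer T h g x ≤ SPer T h g x' := by
    obtain ⟨v⟩ := hT.1.connected.nonempty
    obtain ⟨x, hx⟩ := Nat.sInf_mem (s := Set.range (SPer T h g)) ⟨_, v, rfl⟩
    exact ⟨x, fun x' => hx ▸ Nat.sInf_le ⟨x', rfl⟩⟩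
  have hm2 := mn_cyc hT hk x hm
  have hm3 := mn_cyc hT hk2 _ hm2
  by_cases h1 : x ∈ Axis T h
  swap
  · exact mn_side hT hγ hk x hm h1 ra rb rc
  by_cases h2 : h • x ∈ Axis T g
  swap
  · have := mn_side hT hγ hk2 _ hm2 h2 rb rc ra
    rwa [show a + b + c = b + c + a by ring]
  by_cases h3 : g • h • x ∈ Axis T k
  swap
  · have := mn_side hT hγ hk3 _ hm3 h3 rc ra rb
    rwa [show a + b + c = c + a + b by ring]
  have r1 := ra _ h1
  have r2 := rb _ h2
  have r3 := rc _ h3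
  rw [kk] at r3
  obtain ⟨m, o1, o2, o3⟩ := tr_median hT.1 (h • x) (g • h • x) _ x rfl
  have o3' : OnSeg T (g • h • x) m x := by
    unfold OnSeg at *
    rw [tr_comm (g • h • x) m, tr_comm m x, tr_comm (g • h • x) x, ← o3, add_comm]
  have e1 := F_split hT hγ o1
  have e2 := F_split hT hγ o2
  have e3 := F_split hT hγ o3'
  have f1 := F_anti (G := G) T γ x m
  have f2 := F_anti (G := G) T γ (h • x) m
  have f3 := F_anti (G := G) T γ (g • h • x) m
  rw [abs_le] at *
  constructor <;> linarith

end MainHelpers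

/-- The counting function `f_γ` associated to an oriented segment `γ` in a `G`-tree is a
quasimorphism with defect at most `6`. -/
theorem fCount_quasimorphism {V : Type*} (T : SimpleGraph V) {G : Type*} [Group G]
    [MulAction G V] (hT : IsTreeAction T G) (γ : V × V) (hγ : γ.1 ≠ γ.2) :
    ∀ g h : G, |fCount T G γ (g * h) - fCount T G γ g - fCount T G γ h| ≤ 6 := by
  intro g h
  have r := mn_main hT hγ (h := h) (g := g) (k := (g * h)⁻¹) (by group)
    (fun z hz => f_axis hT hγ h hz) (fun z hz => f_axis hT hγ g hz)
    (r_inv hT (mul_inv_cancel (g * h)) (fun z hz => f_axis hT hγ (g * h) hz))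
  rw [abs_le] at *
  constructor <;> linarith
end
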